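/- arXiv:1710.08225 — 10 statements merged into one kernel-verified Lean document; each statement's English description precedes it below -/
import Mathlib

section
/- Let N ≥ 1. Assume that D₀ has a Riccati first integral of some degree and has no 2-Darbouxian first integral and no rational first integral of any degree. Then D₀ has a Riccati first integral of degree ≤ N defined over K if and only if D₀ has a Riccati first integral of degree ≤ N. -/
/-!
The difference of two Riccati first integrals satisfies the linear equation defining 2-Darbouxian
first integrals, so when the latter do not exist the Riccati first integral `F` over `K̄` is unique
(`IsRic.unique`). The equation has coefficients in `K`, hence every `σ ∈ Gal(K̄/K)` maps `F` to
another solution, that is, to `F` itself. In lowest terms `F = p / q`, with one coefficient of `q`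
normalized to `1`, invariance of the fraction implies invariance of `p` and `q`
(`map_eq_self_of_normalized`); as `K` is perfect, their coefficients then lie in `K`
(`exists_mapAC_eq`). Passing to lowest terms does not increase degrees.
-/

/-!
# Descent to `K` for Riccati first integrals (Corollary `cor:RiccatidansK`)

Suppose `D₀ = A ∂x + B ∂y` has a Riccati first integral (of some degree) and no
2-Darbouxian and no rational first integral (of any degree).  Then `D₀` has a Riccati
first integral of degree ≤ N defined over `K` if and only if it has a Riccati first
integral of degree ≤ N (over the algebraic closure `K̄`).
-/

open MvPolynomial

namespace ExtacticPaper

noncomputable section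

variable {L : Type*}

/-- `wPol A B r` equals `A^(r+1) * ∂y^r (B/A)` as a polynomial. -/
def wPol [CommRing L] (A B : MvPolynomial (Fin 2) L) : ℕ → MvPolynomial (Fin 2) L
  | 0 => B
  | r + 1 => A * pderiv (1 : Fin 2) (wPol A B r) - (r + 1) • (wPol A B r * pderiv (1 : Fin 2) A)

/-- The derivation `D₀ = A ∂x + B ∂y` of `L[x,y]`. -/
def derD0 [CommRing L] (A B p : MvPolynomial (Fin 2) L) : MvPolynomial (Fin 2) L :=
  A * pderiv (0 : Fin 2) p + B * pderiv (1 : Fin 2) p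

/-- `D₀` has a rational first integral of degree ≤ N (with witness over `L`):
a nonconstant `F = p/q` with `deg p, deg q ≤ N` and `D₀(F) = 0`, the latter encoded by the
representation-independent identity `q·D₀(p) = p·D₀(q)`. -/
def HasRatFI [Field L] (A B : MvPolynomial (Fin 2) L) (N : ℕ) : Prop :=
  ∃ p q : MvPolynomial (Fin 2) L, q ≠ 0 ∧ p.totalDegree ≤ N ∧ q.totalDegree ≤ N ∧
    q * derD0 A B p = p * derD0 A B q ∧ ∀ c : L, p ≠ C c * q

/-- `D₀` has a `k`-Darbouxian first integral of degree ≤ N (with witness over `L`):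
a nonzero `G = p/q` with `deg p, deg q ≤ N` and `D₀(G) = −k·A·∂y(B/A)·G`; since
`A·∂y(B/A) = w₁/A`, this is encoded by `A·(q·D₀(p) − p·D₀(q)) = −k·w₁·p·q`. -/
def HasDarbFI [Field L] (A B : MvPolynomial (Fin 2) L) (k N : ℕ) : Prop :=
  ∃ p q : MvPolynomial (Fin 2) L, q ≠ 0 ∧ p ≠ 0 ∧ p.totalDegree ≤ N ∧ q.totalDegree ≤ N ∧
    A * (q * derD0 A B p - p * derD0 A B q)
      = -((k : MvPolynomial (Fin 2) L) * wPol A B 1 * p * q)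

/-- Base change of a polynomial from `K` to the algebraic closure of `K`. -/
def mapAC {K : Type*} [Field K] (p : MvPolynomial (Fin 2) K) :
    MvPolynomial (Fin 2) (AlgebraicClosure K) :=
  MvPolynomial.map (algebraMap K (AlgebraicClosure K)) p

/-- `D₀` has a Riccati first integral of degree ≤ N (with witness over `L`):
an `F = p/q` with `deg p, deg q ≤ N` and `D₀(F) = −2·A·∂y(B/A)·F + (1/2)·A·∂y³(B/A)`; since
`A·∂y(B/A) = w₁/A` and `A·∂y³(B/A) = w₃/A³`, this is encoded by
`A³·(q·D₀(p) − p·D₀(q)) = −2·A²·w₁·p·q + (1/2)·w₃·q²`. -/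
def HasRicFI [Field L] (A B : MvPolynomial (Fin 2) L) (N : ℕ) : Prop :=
  ∃ p q : MvPolynomial (Fin 2) L, q ≠ 0 ∧ p.totalDegree ≤ N ∧ q.totalDegree ≤ N ∧
    A ^ 3 * (q * derD0 A B p - p * derD0 A B q)
      = -(2 * A ^ 2 * wPol A B 1 * p * q) + C (1/2 : L) * wPol A B 3 * q ^ 2

/-- The fraction `p / q` satisfies the Riccati equation of `HasRicFI`, in the same
cleared-denominator form, with no restriction on degrees or on `q`. -/
def IsRic [Field L] (A B p q : MvPolynomial (Fin 2) L) : Prop :=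
  A ^ 3 * (q * derD0 A B p - p * derD0 A B q)
    = -(2 * A ^ 2 * wPol A B 1 * p * q) + C (1/2 : L) * wPol A B 3 * q ^ 2

lemma totalDegree_map_field {L' : Type*} [Field L] [Field L'] (f : L →+* L')
    (p : MvPolynomial (Fin 2) L) : (map f p).totalDegree = p.totalDegree := by
  simp only [totalDegree, support_map_of_injective p f.injective]

lemma map_wPol {L' : Type*} [Field L] [Field L'] (f : L →+* L')
    (A B : MvPolynomial (Fin 2) L) (r : ℕ) :
    wPol (map f A) (map f B) r = map f (wPol A B r) := by
  induction r with
  | zero => rfl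
  | succ r ih => simp [wPol, ih, pderiv_map]

lemma map_derD0 {L' : Type*} [Field L] [Field L'] (f : L →+* L')
    (A B p : MvPolynomial (Fin 2) L) :
    derD0 (map f A) (map f B) (map f p) = map f (derD0 A B p) := by
  simp [derD0, pderiv_map]

lemma isRic_map_iff {L' : Type*} [Field L] [Field L'] (f : L →+* L')
    (A B p q : MvPolynomial (Fin 2) L) :
    IsRic (map f A) (map f B) (map f p) (map f q) ↔ IsRic A B p q := by
  have hC : (C (1/2 : L') : MvPolynomial (Fin 2) L') = map f (C (1/2)) := by
    rw [map_C, map_div₀ f, map_one f, _root_.map_ofNat f]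
  have h2 : (2 : MvPolynomial (Fin 2) L') = map f 2 :=
    (_root_.map_ofNat (map f) 2).symm
  unfold IsRic
  rw [map_derD0, map_derD0, map_wPol, map_wPol, hC, h2]
  simp only [← map_mul, ← map_pow, ← map_sub, ← map_neg, ← map_add]
  exact (map_injective f f.injective).eq_iff

lemma derD0_mul [Field L] (A B p q : MvPolynomial (Fin 2) L) :
    derD0 A B (p * q) = p * derD0 A B q + q * derD0 A B p := by
  simp [derD0, Derivation.leibniz]; ring

lemma derD0_sub [Field L] (A B p q : MvPolynomial (Fin 2) L) :
    derD0 A B (p - q) = derD0 A B p - derD0 A B q := by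
  simp [derD0]; ring

/-- The Riccati identity depends only on the fraction `p / q`, so a common factor cancels. -/
lemma IsRic.cancel [Field L] {A B c p q : MvPolynomial (Fin 2) L} (hc : c ≠ 0)
    (h : IsRic A B (c * p) (c * q)) : IsRic A B p q := by
  unfold IsRic at h ⊢
  rw [derD0_mul, derD0_mul] at h
  apply mul_left_cancel₀ (pow_ne_zero 2 hc)
  linear_combination h

/-- The difference of two distinct Riccati first integrals is a 2-Darbouxian one, so in the
absence of the latter there is at most one Riccati first integral. -/
lemma IsRic.unique [Field L] {A B p q p' q' : MvPolynomial (Fin 2) L} (hA : A ≠ 0)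
    (hD : ¬ ∃ M : ℕ, HasDarbFI A B 2 M) (hq : q ≠ 0) (hq' : q' ≠ 0)
    (h : IsRic A B p q) (h' : IsRic A B p' q') : p * q' = p' * q := by
  by_contra hne
  refine hD ⟨_, p * q' - p' * q, q * q', mul_ne_zero hq hq', sub_ne_zero.2 hne,
    le_max_left _ _, le_max_right _ _, ?_⟩
  unfold IsRic at h h'
  simp only [derD0_mul, derD0_sub]
  apply mul_left_cancel₀ (pow_ne_zero 2 hA)
  push_cast
  linear_combination q' ^ 2 * h - q ^ 2 * h'

/-- A fraction has a representative with coprime numerator and denominator, whose degrees do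
not increase, and whose denominator has a coefficient equal to `1`. -/
lemma exists_normalized [Field L] {p q : MvPolynomial (Fin 2) L} (hq : q ≠ 0) :
    ∃ c p' q' : MvPolynomial (Fin 2) L, c ≠ 0 ∧ p = c * p' ∧ q = c * q' ∧ IsRelPrime q' p' ∧
      p'.totalDegree ≤ p.totalDegree ∧ q'.totalDegree ≤ q.totalDegree ∧
      ∃ m, coeff m q' = 1 := by
  obtain ⟨q₁, p₁, c, hrel, hq₁, hp₁⟩ := UniqueFactorizationMonoid.exists_reduced_factors q hq p
  have hc : c ≠ 0 := by rintro rfl; simp at hq₁; exact hq hq₁.symm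
  have hq₁0 : q₁ ≠ 0 := by rintro rfl; simp at hq₁; exact hq hq₁.symm
  obtain ⟨m, hm⟩ := ne_zero_iff.1 hq₁0
  set a := coeff m q₁ with ha
  have hu : IsUnit (C a⁻¹ : MvPolynomial (Fin 2) L) := (IsUnit.mk0 _ (inv_ne_zero hm)).map C
  have key : (C a : MvPolynomial (Fin 2) L) * C a⁻¹ = 1 := by
    rw [← C_mul, mul_inv_cancel₀ hm, C_1]
  have hdeg : ∀ r s : MvPolynomial (Fin 2) L, c * r = s →
      (C a⁻¹ * r).totalDegree ≤ s.totalDegree := by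
    rintro r s rfl
    rcases eq_or_ne r 0 with rfl | hr
    · simp
    rw [totalDegree_mul_of_isDomain hu.ne_zero hr, totalDegree_mul_of_isDomain hc hr,
      totalDegree_C]
    omega
  refine ⟨c * C a, C a⁻¹ * p₁, C a⁻¹ * q₁, mul_ne_zero hc (by simpa using hm), ?_, ?_, ?_,
    hdeg _ _ hp₁, hdeg _ _ hq₁, m, ?_⟩
  · linear_combination -hp₁ - c * p₁ * key
  · linear_combination -hq₁ - c * q₁ * key
  · exact (isRelPrime_mul_unit_left hu).2 hrel
  · rw [coeff_C_mul, ← ha, inv_mul_cancel₀ hm]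

/-- If the fraction `p / q` in normalized lowest terms is fixed by `σ`, so are `p` and `q`. -/
lemma map_eq_self_of_normalized [Field L] (σ : L →+* L) {p q : MvPolynomial (Fin 2) L}
    (hrel : IsRelPrime q p) {m : Fin 2 →₀ ℕ} (hm : coeff m q = 1)
    (h : map σ p * q = p * map σ q) : map σ p = p ∧ map σ q = q := by
  have hq : q ≠ 0 := by rintro rfl; simp at hm
  obtain ⟨u, hu⟩ : q ∣ map σ q := hrel.dvd_of_dvd_mul_left ⟨map σ p, by rw [← h, mul_comm]⟩
  -- Equality of total degrees forces the cofactor to be a constant.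
  have hdeg : (map σ q).totalDegree ≤ q.totalDegree := (totalDegree_map_field _ _).le
  have hmq : map σ q ≠ 0 := fun h0 => hq (map_injective σ σ.injective (by simpa using h0))
  have hu0 : u ≠ 0 := by rintro rfl; simp at hu; exact hmq (by simpa using hu)
  rw [hu, totalDegree_mul_of_isDomain hq hu0] at hdeg
  have huC : u = C (coeff 0 u) := (totalDegree_eq_zero_iff_eq_C).1 (by omega)
  have h1 : coeff 0 u = 1 := by
    have := congrArg (coeff m) hu
    rw [huC, coeff_map, mul_comm, coeff_C_mul, hm, map_one, mul_one] at this
    exact this.symm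
  rw [huC, h1, C_1, mul_one] at hu
  refine ⟨mul_right_cancel₀ hq ?_, hu⟩
  rw [h, hu]

/-- Galois descent for polynomials, coefficient by coefficient. -/
lemma exists_mapAC_eq {K : Type*} [Field K] [CharZero K]
    {p : MvPolynomial (Fin 2) (AlgebraicClosure K)}
    (h : ∀ σ : AlgebraicClosure K ≃ₐ[K] AlgebraicClosure K, map (σ : _ →+* _) p = p) :
    ∃ p₀, mapAC p₀ = p := by
  have : p ∈ Set.range (map (σ := Fin 2) (algebraMap K (AlgebraicClosure K))) := by
    rw [mem_range_map_iff_coeffs_subset]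
    intro a ha
    obtain ⟨m, -, rfl⟩ := mem_coeffs_iff.1 ha
    refine (InfiniteGalois.mem_range_algebraMap_iff_fixed _).2 fun σ => ?_
    have := congrArg (coeff m) (h σ)
    rwa [coeff_map] at this
  exact this

/-- **Corollary `cor:RiccatidansK`** of Chèze–Combot. -/
theorem riccati_defined_over_K {K : Type*} [Field K] [CharZero K]
    (A B : MvPolynomial (Fin 2) K) (hA : A ≠ 0) (hB : B ≠ 0)
    (hcop : ∀ p : MvPolynomial (Fin 2) K, p ∣ A → p ∣ B → IsUnit p)
    (d : ℕ) (hd : d = max A.totalDegree B.totalDegree) (hd1 : 1 ≤ d)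
    (N : ℕ) (hN : 1 ≤ N)
    (hric : ∃ M : ℕ, HasRicFI (mapAC A) (mapAC B) M)
    (hnodarb : ¬ ∃ M : ℕ, HasDarbFI (mapAC A) (mapAC B) 2 M)
    (hnorat : ¬ ∃ M : ℕ, HasRatFI (mapAC A) (mapAC B) M) :
    HasRicFI A B N ↔ HasRicFI (mapAC A) (mapAC B) N := by
  have hA' : mapAC A ≠ 0 := fun h0 =>
    hA (map_injective _ (algebraMap K (AlgebraicClosure K)).injective (by simpa [mapAC] using h0))
  constructor
  · rintro ⟨p, q, hq, hp, hqN, h⟩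
    refine ⟨mapAC p, mapAC q, fun h0 => hq ?_, ((totalDegree_map_field _ _).le).trans hp,
      ((totalDegree_map_field _ _).le).trans hqN, (isRic_map_iff _ A B p q).2 h⟩
    exact map_injective _ (algebraMap K (AlgebraicClosure K)).injective (by simpa [mapAC] using h0)
  · rintro ⟨p, q, hq, hp, hqN, h⟩
    obtain ⟨c, p', q', hc, rfl, rfl, hrel, hp', hq', m, hm⟩ := exists_normalized (p := p) hq
    have h' : IsRic (mapAC A) (mapAC B) p' q' := IsRic.cancel hc h
    have hq0 : q' ≠ 0 := right_ne_zero_of_mul hq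
    have hfix (σ : AlgebraicClosure K ≃ₐ[K] AlgebraicClosure K) :
        map (σ : AlgebraicClosure K →+* AlgebraicClosure K) p' = p' ∧
        map (σ : AlgebraicClosure K →+* AlgebraicClosure K) q' = q' := by
      have hσ (r : MvPolynomial (Fin 2) K) :
          map (σ : AlgebraicClosure K →+* AlgebraicClosure K) (mapAC r) = mapAC r := by
        rw [mapAC, map_map]
        exact congrArg (fun g => map g r) (RingHom.ext fun x => σ.commutes x)
      have hs := (isRic_map_iff (σ : AlgebraicClosure K →+* AlgebraicClosure K) _ _ _ _).2 h'
      rw [hσ, hσ] at hs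
      refine map_eq_self_of_normalized _ hrel hm (IsRic.unique hA' hnodarb ?_ hq0 hs h')
      exact fun h0 => hq0 (map_injective _
        (σ : AlgebraicClosure K →+* AlgebraicClosure K).injective (by simpa using h0))
    obtain ⟨p₀, rfl⟩ := exists_mapAC_eq fun σ => (hfix σ).1
    obtain ⟨q₀, rfl⟩ := exists_mapAC_eq fun σ => (hfix σ).2
    have hd (r : MvPolynomial (Fin 2) K) : (mapAC r).totalDegree = r.totalDegree :=
      totalDegree_map_field _ r
    refine ⟨p₀, q₀, ?_, (hd p₀).symm.trans_le (hp'.trans hp),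
      (hd q₀).symm.trans_le (hq'.trans hqN), (isRic_map_iff _ A B p₀ q₀).1 h'⟩
    rintro rfl
    simp [mapAC] at hq0

end
end ExtacticPaper
end

section
/- For every integer k ≥ 1 and every H ∈ K(x,y), viewed inside K(x,y,y₁): D₁(y₁^k·H) = 0 if and only if D₀(H) = −k·A·∂y(B/A)·H. (This is the algebraic content of: the vector field (A,B) admits a k-Darbouxian first integral whose defining datum F satisfies F^k = H if and only if y₁^k·H is a rational first integral of the first variational system (S′₁).) -/
/-!
# Why the equivalence holds

Write `Y` for the class of `y₁` and `w = A² ∂y(B/A)`. On polynomials in `x, y` alone `∂_{y₁}`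
vanishes, so `D₁` restricts to `A · D₀` (`derD1_emb3`); clearing a denominator with the Leibniz
rule carries this relation to all of `K(x,y)` (`leibniz_extension`). On the other hand
`D₁(Y) = w Y` (`derD1_X2`), so `D₁(Y ^ k) = k w Y ^ k` (`leibniz_pow`). Hence
`D₁(Y ^ k H) = Y ^ k (k w H + A D₀(H))`. Since `Y` is a unit of the field and `K(x,y)` embeds
injectively, this vanishes exactly when `A D₀(H) = -k w H`, and `A ≠ 0` can be divided out.
-/

/-!
# Darbouxian first integrals and rational first integrals of `(S′₁)` (Proposition `propinv`)

`K` is a field of characteristic zero, `A, B ∈ K[x,y]` with `A ≠ 0`,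
`D₀ = A ∂x + B ∂y` on `K[x,y]` and `D₁ = A² ∂x + A B ∂y + y₁ A² ∂y(B/A) ∂_{y₁}` on
`K[x,y,y₁]`, both extended uniquely to the corresponding rational function fields
(the extensions are encoded below as additive maps satisfying the Leibniz rule which agree
with `D₀`, resp. `D₁`, on polynomials).

For every `k ≥ 1` and `H ∈ K(x,y)` (viewed in `K(x,y,y₁)` via the embedding `j`):
`D₁(y₁^k · H) = 0` if and only if `D₀(H) = −k·A·∂y(B/A)·H`,
where `A·∂y(B/A) = w₁/A` with `w₁ = A·∂y(B) − B·∂y(A)`.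
-/

open MvPolynomial

namespace ExtacticPaper

noncomputable section

variable {L : Type*}

/-- Embedding of `L[x,y]` into `L[x,y,y₁]`. -/
def emb3 [CommSemiring L] (p : MvPolynomial (Fin 2) L) : MvPolynomial (Fin 3) L :=
  rename (Fin.castLE (by omega)) p

/-- The derivation `D₁ = A² ∂x + A B ∂y + y₁ A² ∂y(B/A) ∂_{y₁}` of `L[x,y,y₁]`. -/
def derD1 [CommRing L] (A B : MvPolynomial (Fin 2) L) (p : MvPolynomial (Fin 3) L) :
    MvPolynomial (Fin 3) L :=
  emb3 A ^ 2 * pderiv (0 : Fin 3) p + emb3 A * emb3 B * pderiv (1 : Fin 3) p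
    + X 2 * emb3 (wPol A B 1) * pderiv (2 : Fin 3) p

/-- `D₁` restricts to `A · D₀` on `L[x,y]`. -/
lemma derD1_emb3 [CommRing L] (A B p : MvPolynomial (Fin 2) L) :
    derD1 A B (emb3 p) = emb3 A * emb3 (derD0 A B p) := by
  have hinj : Function.Injective (Fin.castLE (by omega : 2 ≤ 3)) := Fin.castLE_injective _
  have h0 : pderiv (0 : Fin 3) (emb3 p) = emb3 (pderiv 0 p) := pderiv_rename hinj 0 p
  have h1 : pderiv (1 : Fin 3) (emb3 p) = emb3 (pderiv 1 p) := pderiv_rename hinj 1 p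
  have h2 : pderiv (2 : Fin 3) (emb3 p) = 0 := by
    classical
    refine pderiv_eq_zero_of_notMem_vars fun h => ?_
    obtain ⟨i, -, hi⟩ := Finset.mem_image.1 (vars_rename _ p h)
    fin_cases i <;> simp [Fin.ext_iff] at hi
  rw [derD1, h0, h1, h2]
  simp only [derD0, emb3, map_add, map_mul]
  ring

lemma derD1_X2 [CommRing L] (A B : MvPolynomial (Fin 2) L) :
    derD1 A B (X 2) = X 2 * emb3 (wPol A B 1) := by
  simp [derD1, pderiv_X]

/-- An eigenvector `y` of a Leibniz map, with eigenvalue `c`, has powers with eigenvalue `k c`. -/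
lemma leibniz_pow {F : Type*} [Field F] (δ : F → F)
    (hm : ∀ a b, δ (a * b) = δ a * b + a * δ b) {y c : F} (hy : δ y = y * c) (k : ℕ) :
    δ (y ^ k) = k * c * y ^ k := by
  induction k with
  | zero => simpa using hm 1 1
  | succ n ih =>
    rw [pow_succ, hm, ih, hy]
    push_cast
    ring

/-- If `δ₁ ∘ j = c · (j ∘ δ₀)` holds on a domain `R` with fraction field `F`, then it holds on
`F`: the Leibniz rule determines the derivative of `p / q` from those of `p` and `q`. -/
lemma leibniz_extension {R F G : Type*} [CommRing R] [IsDomain R] [Field F] [Algebra R F]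
    [IsFractionRing R F] [Field G] (δ0 : F → F) (δ1 : G → G) (j : F →+* G) (c : G)
    (h0 : ∀ a b, δ0 (a * b) = δ0 a * b + a * δ0 b)
    (h1 : ∀ a b, δ1 (a * b) = δ1 a * b + a * δ1 b)
    (h : ∀ p : R, δ1 (j (algebraMap R F p)) = c * j (δ0 (algebraMap R F p))) (H : F) :
    δ1 (j H) = c * j (δ0 H) := by
  obtain ⟨p, q, hq, rfl⟩ := IsFractionRing.div_surjective (A := R) H
  have hq0 : algebraMap R F q ≠ 0 := IsFractionRing.to_map_ne_zero_of_mem_nonZeroDivisors hq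
  have hjq : j (algebraMap R F q) ≠ 0 := (map_ne_zero j).2 hq0
  set H := algebraMap R F p / algebraMap R F q with hH
  have hp : algebraMap R F q * H = algebraMap R F p := mul_div_cancel₀ _ hq0
  -- Both sides satisfy the equation obtained by differentiating `q * H = p`.
  have e0 := congrArg j (h0 (algebraMap R F q) H)
  have e1 := h1 (j (algebraMap R F q)) (j H)
  rw [← map_mul, hp, h, h] at e1
  rw [hp, map_add, map_mul, map_mul] at e0
  apply mul_left_cancel₀ hjq
  linear_combination c * e0 - e1

/-- **Proposition `propinv`, `k`-Darbouxian case** of Chèze–Combot. -/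
theorem darbouxian_first_integral_iff {K : Type*} [Field K] [CharZero K]
    (A B : MvPolynomial (Fin 2) K) (hA : A ≠ 0)
    -- the unique extension of `D₀` to `K(x,y)`
    (δ0 : FractionRing (MvPolynomial (Fin 2) K) → FractionRing (MvPolynomial (Fin 2) K))
    (hδ0a : ∀ a b, δ0 (a + b) = δ0 a + δ0 b)
    (hδ0m : ∀ a b, δ0 (a * b) = δ0 a * b + a * δ0 b)
    (hδ0e : ∀ p : MvPolynomial (Fin 2) K,
      δ0 (algebraMap (MvPolynomial (Fin 2) K) (FractionRing (MvPolynomial (Fin 2) K)) p)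
        = algebraMap (MvPolynomial (Fin 2) K) (FractionRing (MvPolynomial (Fin 2) K))
            (derD0 A B p))
    -- the unique extension of `D₁` to `K(x,y,y₁)`
    (δ1 : FractionRing (MvPolynomial (Fin 3) K) → FractionRing (MvPolynomial (Fin 3) K))
    (hδ1a : ∀ a b, δ1 (a + b) = δ1 a + δ1 b)
    (hδ1m : ∀ a b, δ1 (a * b) = δ1 a * b + a * δ1 b)
    (hδ1e : ∀ p : MvPolynomial (Fin 3) K,
      δ1 (algebraMap (MvPolynomial (Fin 3) K) (FractionRing (MvPolynomial (Fin 3) K)) p)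
        = algebraMap (MvPolynomial (Fin 3) K) (FractionRing (MvPolynomial (Fin 3) K))
            (derD1 A B p))
    -- the embedding `K(x,y) ⊆ K(x,y,y₁)`
    (j : FractionRing (MvPolynomial (Fin 2) K) →+* FractionRing (MvPolynomial (Fin 3) K))
    (hj : ∀ p : MvPolynomial (Fin 2) K,
      j (algebraMap (MvPolynomial (Fin 2) K) (FractionRing (MvPolynomial (Fin 2) K)) p)
        = algebraMap (MvPolynomial (Fin 3) K) (FractionRing (MvPolynomial (Fin 3) K)) (emb3 p))
    (k : ℕ) (hk : 1 ≤ k) (H : FractionRing (MvPolynomial (Fin 2) K)) :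
    δ1 (algebraMap (MvPolynomial (Fin 3) K) (FractionRing (MvPolynomial (Fin 3) K)) (X 2) ^ k
        * j H) = 0 ↔
      δ0 H = -((k : FractionRing (MvPolynomial (Fin 2) K)) *
        (algebraMap (MvPolynomial (Fin 2) K) (FractionRing (MvPolynomial (Fin 2) K))
            (wPol A B 1) /
          algebraMap (MvPolynomial (Fin 2) K) (FractionRing (MvPolynomial (Fin 2) K)) A) * H) := by
  set a := algebraMap (MvPolynomial (Fin 2) K) (FractionRing (MvPolynomial (Fin 2) K)) A
    with ha
  set w := algebraMap (MvPolynomial (Fin 2) K) (FractionRing (MvPolynomial (Fin 2) K)) (wPol A B 1)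
    with hw
  set Y := algebraMap (MvPolynomial (Fin 3) K) (FractionRing (MvPolynomial (Fin 3) K)) (X 2)
    with hYdef
  have ha0 : a ≠ 0 := by
    simpa [ha] using hA
  have hY0 : Y ≠ 0 := by
    simp [hYdef]
  have hY : δ1 Y = Y * j w := by
    rw [hYdef, hδ1e, derD1_X2, map_mul, hw, hj]
  have hj1 : δ1 (j H) = j a * j (δ0 H) :=
    leibniz_extension (R := MvPolynomial (Fin 2) K) δ0 δ1 j (j a) hδ0m hδ1m
      (fun p => by rw [hj, hδ1e, derD1_emb3, map_mul, hδ0e, hj, hj]) H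
  have key : δ1 (Y ^ k * j H) = Y ^ k * j (k * w * H + a * δ0 H) := by
    rw [hδ1m, leibniz_pow δ1 hδ1m hY, hj1]
    simp only [map_add, map_mul, map_natCast]
    ring
  rw [key, mul_eq_zero_iff_left (pow_ne_zero k hY0), map_eq_zero]
  constructor
  · intro h
    field_simp
    linear_combination h
  · intro h
    rw [h]
    field_simp
    ring

end
end ExtacticPaper
end

section
/- For every F ∈ K(x,y), viewed inside K(x,y,y₁,y₂): D₂(y₁·F + y₂/y₁) = 0 if and only if D₀(F) = −A·∂y(B/A)·F − A·∂y²(B/A). (This is the algebraic content of: the vector field (A,B) admits a Liouvillian first integral associated to the equation ∂y²𝓕 − F·∂y𝓕 = 0 if and only if y₁·F + y₂/y₁ is a rational first integral of the second variational system (S′₂).) -/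
/-!
# Liouvillian first integrals and rational first integrals of `(S′₂)` (Proposition `propinv`)

`K` is a field of characteristic zero, `A, B ∈ K[x,y]` with `A ≠ 0`,
`D₀ = A ∂x + B ∂y` on `K[x,y]` and
`D₂ = A³ ∂x + A² B ∂y + y₁ A³ ∂y(B/A) ∂_{y₁} + A³ (y₂ ∂y(B/A) + y₁² ∂y²(B/A)) ∂_{y₂}`
on `K[x,y,y₁,y₂]`, both extended uniquely to the corresponding rational function fields
(the extensions are encoded below as additive maps satisfying the Leibniz rule which agree
with `D₀`, resp. `D₂`, on polynomials).

For every `F ∈ K(x,y)` (viewed in `K(x,y,y₁,y₂)` via the embedding `j`):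
`D₂(y₁·F + y₂/y₁) = 0` if and only if `D₀(F) = −A·∂y(B/A)·F − A·∂y²(B/A)`,
where `A·∂y(B/A) = w₁/A` and `A·∂y²(B/A) = w₂/A²`.
-/

open MvPolynomial

namespace ExtacticPaper

noncomputable section

variable {L : Type*}

/-- Embedding of `L[x,y]` into `L[x,y,y₁,y₂]`. -/
def emb4 [CommSemiring L] (p : MvPolynomial (Fin 2) L) : MvPolynomial (Fin 4) L :=
  rename (Fin.castLE (by omega)) p

/-- The derivation
`D₂ = A³ ∂x + A² B ∂y + y₁ A³ ∂y(B/A) ∂_{y₁} + A³ (y₂ ∂y(B/A) + y₁² ∂y²(B/A)) ∂_{y₂}`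
of `L[x,y,y₁,y₂]`. -/
def derD2 [CommRing L] (A B : MvPolynomial (Fin 2) L) (p : MvPolynomial (Fin 4) L) :
    MvPolynomial (Fin 4) L :=
  emb4 A ^ 3 * pderiv (0 : Fin 4) p + emb4 A ^ 2 * emb4 B * pderiv (1 : Fin 4) p
    + X 2 * emb4 A * emb4 (wPol A B 1) * pderiv (2 : Fin 4) p
    + (X 3 * emb4 A * emb4 (wPol A B 1) + X 2 ^ 2 * emb4 (wPol A B 2)) * pderiv (3 : Fin 4) p

/-!
Since `D₂` restricts to `A² D₀` on `K[x,y]`, the quotient rule gives `D₂ F = A² D₀ F` for every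
`F ∈ K(x,y)`. With `w₁ = A² ∂y(B/A)` and `w₂ = A³ ∂y²(B/A)` one has `D₂ y₁ = y₁ A w₁` and
`D₂ (y₂ / y₁) = y₁ w₂`, because the two terms in `y₂` cancel. Hence
`D₂ (y₁ F + y₂ / y₁) = y₁ (A² D₀ F + A w₁ F + w₂)`, where the second factor lies in `K(x,y)`,
and `y₁` and `A` are nonzero.
-/

section Helpers

variable {R : Type*} [CommRing R]

lemma emb4_add (p q : MvPolynomial (Fin 2) R) : emb4 (p + q) = emb4 p + emb4 q := by
  simp [emb4]

lemma emb4_mul (p q : MvPolynomial (Fin 2) R) : emb4 (p * q) = emb4 p * emb4 q := by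
  simp [emb4]

lemma castLE_injective : Function.Injective (Fin.castLE (by omega : 2 ≤ 4)) :=
  Fin.castLE_injective _

lemma pderiv_zero_emb4 (p : MvPolynomial (Fin 2) R) :
    pderiv (0 : Fin 4) (emb4 p) = emb4 (pderiv (0 : Fin 2) p) :=
  pderiv_rename castLE_injective 0 p

lemma pderiv_one_emb4 (p : MvPolynomial (Fin 2) R) :
    pderiv (1 : Fin 4) (emb4 p) = emb4 (pderiv (1 : Fin 2) p) :=
  pderiv_rename castLE_injective 1 p

lemma pderiv_emb4_eq_zero (p : MvPolynomial (Fin 2) R) {i : Fin 4} (hi : 2 ≤ i) :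
    pderiv i (emb4 p) = 0 := by
  induction p using MvPolynomial.induction_on with
  | C a => simp [emb4]
  | add p q hp hq => rw [emb4_add, map_add, hp, hq, add_zero]
  | mul_X p n hp =>
    have hne : Fin.castLE (by omega : 2 ≤ 4) n ≠ i := by
      intro h
      have := congrArg Fin.val h
      have h2 : 2 ≤ i.val := hi
      simp only [Fin.val_castLE] at this
      omega
    rw [emb4_mul, pderiv_mul, hp]
    simp [emb4, pderiv_X_of_ne hne]

lemma derD2_emb4 (A B p : MvPolynomial (Fin 2) R) :
    derD2 A B (emb4 p) = emb4 A ^ 2 * emb4 (derD0 A B p) := by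
  rw [derD2, derD0, pderiv_zero_emb4, pderiv_one_emb4, pderiv_emb4_eq_zero p (i := 2) le_rfl,
    pderiv_emb4_eq_zero p (i := 3) (by decide), emb4_add, emb4_mul, emb4_mul]
  ring

lemma derD2_X_two (A B : MvPolynomial (Fin 2) R) :
    derD2 A B (X 2) = X 2 * emb4 A * emb4 (wPol A B 1) := by
  simp [derD2, pderiv_X]

lemma derD2_X_three (A B : MvPolynomial (Fin 2) R) :
    derD2 A B (X 3) = X 3 * emb4 A * emb4 (wPol A B 1) + X 2 ^ 2 * emb4 (wPol A B 2) := by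
  simp [derD2, pderiv_X]

end Helpers

/-- Quotient rule for a map satisfying only the product rule, with the denominator cleared. -/
lemma leibniz_div {E : Type*} [Field E] {d : E → E}
    (hm : ∀ a b, d (a * b) = d a * b + a * d b) (a : E) {b : E} (hb : b ≠ 0) :
    d (a / b) * b = d a - a / b * d b := by
  have h := hm (a / b) b
  rw [div_mul_cancel₀ a hb] at h
  rw [h]
  ring

/-- **Proposition `propinv`, Liouvillian case** of Chèze–Combot. -/
theorem liouvillian_first_integral_iff {K : Type*} [Field K] [CharZero K]
    (A B : MvPolynomial (Fin 2) K) (hA : A ≠ 0)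
    -- the unique extension of `D₀` to `K(x,y)`
    (δ0 : FractionRing (MvPolynomial (Fin 2) K) → FractionRing (MvPolynomial (Fin 2) K))
    (hδ0a : ∀ a b, δ0 (a + b) = δ0 a + δ0 b)
    (hδ0m : ∀ a b, δ0 (a * b) = δ0 a * b + a * δ0 b)
    (hδ0e : ∀ p : MvPolynomial (Fin 2) K,
      δ0 (algebraMap (MvPolynomial (Fin 2) K) (FractionRing (MvPolynomial (Fin 2) K)) p)
        = algebraMap (MvPolynomial (Fin 2) K) (FractionRing (MvPolynomial (Fin 2) K))
            (derD0 A B p))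
    -- the unique extension of `D₂` to `K(x,y,y₁,y₂)`
    (δ2 : FractionRing (MvPolynomial (Fin 4) K) → FractionRing (MvPolynomial (Fin 4) K))
    (hδ2a : ∀ a b, δ2 (a + b) = δ2 a + δ2 b)
    (hδ2m : ∀ a b, δ2 (a * b) = δ2 a * b + a * δ2 b)
    (hδ2e : ∀ p : MvPolynomial (Fin 4) K,
      δ2 (algebraMap (MvPolynomial (Fin 4) K) (FractionRing (MvPolynomial (Fin 4) K)) p)
        = algebraMap (MvPolynomial (Fin 4) K) (FractionRing (MvPolynomial (Fin 4) K))
            (derD2 A B p))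
    -- the embedding `K(x,y) ⊆ K(x,y,y₁,y₂)`
    (j : FractionRing (MvPolynomial (Fin 2) K) →+* FractionRing (MvPolynomial (Fin 4) K))
    (hj : ∀ p : MvPolynomial (Fin 2) K,
      j (algebraMap (MvPolynomial (Fin 2) K) (FractionRing (MvPolynomial (Fin 2) K)) p)
        = algebraMap (MvPolynomial (Fin 4) K) (FractionRing (MvPolynomial (Fin 4) K)) (emb4 p))
    (F : FractionRing (MvPolynomial (Fin 2) K)) :
    δ2 (algebraMap (MvPolynomial (Fin 4) K) (FractionRing (MvPolynomial (Fin 4) K)) (X 2) * j F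
        + algebraMap (MvPolynomial (Fin 4) K) (FractionRing (MvPolynomial (Fin 4) K)) (X 3) /
          algebraMap (MvPolynomial (Fin 4) K) (FractionRing (MvPolynomial (Fin 4) K)) (X 2)) = 0 ↔
      δ0 F = -((algebraMap (MvPolynomial (Fin 2) K) (FractionRing (MvPolynomial (Fin 2) K))
            (wPol A B 1) /
          algebraMap (MvPolynomial (Fin 2) K) (FractionRing (MvPolynomial (Fin 2) K)) A) * F)
        - algebraMap (MvPolynomial (Fin 2) K) (FractionRing (MvPolynomial (Fin 2) K))
            (wPol A B 2) /
          algebraMap (MvPolynomial (Fin 2) K) (FractionRing (MvPolynomial (Fin 2) K)) A ^ 2 := by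
  set ι2 := algebraMap (MvPolynomial (Fin 2) K) (FractionRing (MvPolynomial (Fin 2) K))
  set ι4 := algebraMap (MvPolynomial (Fin 4) K) (FractionRing (MvPolynomial (Fin 4) K))
  have inj2 : Function.Injective ι2 := IsFractionRing.injective _ _
  have inj4 : Function.Injective ι4 := IsFractionRing.injective _ _
  have hA2 : ι2 A ≠ 0 := (map_ne_zero_iff ι2 inj2).2 hA
  have hy : ι4 (X 2) ≠ 0 := (map_ne_zero_iff ι4 inj4).2 (X_ne_zero _)
  have hpol (p : MvPolynomial (Fin 2) K) : δ2 (j (ι2 p)) = j (ι2 A ^ 2 * δ0 (ι2 p)) := by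
    rw [hj, hδ2e, derD2_emb4, hδ0e, map_mul, map_pow, map_mul, map_pow, hj, hj]
  have hF : δ2 (j F) = j (ι2 A ^ 2 * δ0 F) := by
    obtain ⟨p, q, hq, rfl⟩ := IsFractionRing.div_surjective (A := MvPolynomial (Fin 2) K) F
    have hq2 : ι2 q ≠ 0 := (map_ne_zero_iff ι2 inj2).2 (nonZeroDivisors.ne_zero hq)
    have hq4 : j (ι2 q) ≠ 0 := (map_ne_zero j).2 hq2
    have h4 := leibniz_div hδ2m (j (ι2 p)) hq4
    have h2 := congrArg j (leibniz_div hδ0m (ι2 p) hq2)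
    rw [hpol, hpol] at h4
    apply mul_right_cancel₀ hq4
    rw [map_div₀, h4]
    simp only [map_mul, map_sub, map_pow, map_div₀] at h2 ⊢
    linear_combination (-j (ι2 A) ^ 2) * h2
  have hX2 : δ2 (ι4 (X 2)) = ι4 (X 2) * j (ι2 A * ι2 (wPol A B 1)) := by
    rw [hδ2e, derD2_X_two]
    simp only [map_mul, hj]
    ring
  have hX3 : δ2 (ι4 (X 3)) = ι4 (X 3) * j (ι2 A * ι2 (wPol A B 1))
      + ι4 (X 2) ^ 2 * j (ι2 (wPol A B 2)) := by
    rw [hδ2e, derD2_X_three]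
    simp only [map_mul, map_add, map_pow, hj]
    ring
  have hquot : δ2 (ι4 (X 3) / ι4 (X 2)) = ι4 (X 2) * j (ι2 (wPol A B 2)) := by
    apply mul_right_cancel₀ hy
    rw [leibniz_div hδ2m _ hy, hX2, hX3]
    field_simp
    ring
  have key : δ2 (ι4 (X 2) * j F + ι4 (X 3) / ι4 (X 2))
      = ι4 (X 2) * j (ι2 A ^ 2 * δ0 F + ι2 A * ι2 (wPol A B 1) * F + ι2 (wPol A B 2)) := by
    rw [hδ2a, hδ2m, hquot, hX2, hF]
    simp only [map_add, map_mul]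
    ring
  rw [key, mul_eq_zero, or_iff_right hy, map_eq_zero]
  constructor
  · intro h
    field_simp
    linear_combination h
  · intro h
    rw [h]
    field_simp
    ring

end
end ExtacticPaper
end

section
/- For every F ∈ K(x,y), viewed inside K(x,y,y₁,y₂,y₃): D₃(4·y₁²·F − 2·y₃/y₁ + 3·y₂²/y₁²) = 0 if and only if D₀(F) = −2·A·∂y(B/A)·F + (1/2)·A·∂y³(B/A). (This is the algebraic content of: the vector field (A,B) admits a Riccati first integral associated to the equation ∂y²𝓕 − F·𝓕 = 0 if and only if 4y₁²F − 2y₃/y₁ + 3y₂²/y₁² is a rational first integral of the third variational system (S′₃).) -/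
/-!
Write `a, w₁, w₂, w₃` for the images of `A`, `wPol A B 1`, `wPol A B 2`, `wPol A B 3` in
`K(x,y,y₁,y₂,y₃)`. On the subfield `K(x,y)` the derivation `D₃` restricts to `A³ D₀`
(`ext_restrict`): on polynomials this is a computation (`derD3_emb5`), and it passes to fractions
because a derivation of a field is determined on a quotient by its values on numerator and
denominator. Expanding with the Leibniz rule, the terms in `y₂ w₂` coming from `-2 y₃/y₁` and
`3 y₂²/y₁²` cancel, leaving (`deriv_riccati`)

`D₃(4 y₁² F - 2 y₃/y₁ + 3 y₂²/y₁²) = y₁² (8 a² w₁ F + 4 a³ D₀ F - 2 w₃)`.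

Since `y₁` and `a` are nonzero and the characteristic is not `2`, this vanishes exactly when
`D₀ F = -2 (w₁/a) F + (1/2) w₃/a³`, and this identity may be checked in `K(x,y)` since `j` is
injective.
-/

/-!
# Riccati first integrals and rational first integrals of `(S′₃)` (Proposition `propinv`)

`K` is a field of characteristic zero, `A, B ∈ K[x,y]` with `A ≠ 0`,
`D₀ = A ∂x + B ∂y` on `K[x,y]` and
`D₃ = A⁴ ∂x + A³ B ∂y + y₁ A⁴ ∂y(B/A) ∂_{y₁} + A⁴ (y₂ ∂y(B/A) + y₁² ∂y²(B/A)) ∂_{y₂}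
  + A⁴ (y₃ ∂y(B/A) + 3 y₂ y₁ ∂y²(B/A) + y₁³ ∂y³(B/A)) ∂_{y₃}` on `K[x,y,y₁,y₂,y₃]`,
both extended uniquely to the corresponding rational function fields (the extensions are
encoded below as additive maps satisfying the Leibniz rule which agree with `D₀`, resp.
`D₃`, on polynomials).

For every `F ∈ K(x,y)` (viewed in `K(x,y,y₁,y₂,y₃)` via the embedding `j`):
`D₃(4·y₁²·F − 2·y₃/y₁ + 3·y₂²/y₁²) = 0` if and only if
`D₀(F) = −2·A·∂y(B/A)·F + (1/2)·A·∂y³(B/A)`,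
where `A·∂y(B/A) = w₁/A` and `A·∂y³(B/A) = w₃/A³`.
-/

open MvPolynomial

namespace ExtacticPaper

noncomputable section

variable {L : Type*}

/-- Embedding of `L[x,y]` into `L[x,y,y₁,y₂,y₃]`. -/
def emb5 [CommSemiring L] (p : MvPolynomial (Fin 2) L) : MvPolynomial (Fin 5) L :=
  rename (Fin.castLE (by omega)) p

/-- The derivation `D₃` of `L[x,y,y₁,y₂,y₃]`. -/
def derD3 [CommRing L] (A B : MvPolynomial (Fin 2) L) (p : MvPolynomial (Fin 5) L) :
    MvPolynomial (Fin 5) L :=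
  emb5 A ^ 4 * pderiv (0 : Fin 5) p + emb5 A ^ 3 * emb5 B * pderiv (1 : Fin 5) p
    + X 2 * emb5 A ^ 2 * emb5 (wPol A B 1) * pderiv (2 : Fin 5) p
    + (X 3 * emb5 A ^ 2 * emb5 (wPol A B 1) + X 2 ^ 2 * emb5 A * emb5 (wPol A B 2))
        * pderiv (3 : Fin 5) p
    + (X 4 * emb5 A ^ 2 * emb5 (wPol A B 1) + 3 * X 3 * X 2 * emb5 A * emb5 (wPol A B 2)
        + X 2 ^ 3 * emb5 (wPol A B 3)) * pderiv (4 : Fin 5) p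

lemma pderiv_emb5_zero {K : Type*} [CommRing K] (p : MvPolynomial (Fin 2) K) :
    pderiv (0 : Fin 5) (emb5 p) = emb5 (pderiv (0 : Fin 2) p) :=
  pderiv_rename (Fin.castLE_injective (by omega : 2 ≤ 5)) 0 p

lemma pderiv_emb5_one {K : Type*} [CommRing K] (p : MvPolynomial (Fin 2) K) :
    pderiv (1 : Fin 5) (emb5 p) = emb5 (pderiv (1 : Fin 2) p) :=
  pderiv_rename (Fin.castLE_injective (by omega : 2 ≤ 5)) 1 p

lemma pderiv_emb5_of_two_le {K : Type*} [CommRing K] (i : Fin 5) (hi : 2 ≤ (i : ℕ))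
    (p : MvPolynomial (Fin 2) K) : pderiv i (emb5 p) = 0 := by
  classical
  apply pderiv_eq_zero_of_notMem_vars
  intro h
  obtain ⟨k, -, hk⟩ := Finset.mem_image.1 (vars_rename _ p h)
  have := congrArg Fin.val hk
  simp only [Fin.val_castLE] at this
  omega

/-- On `K[x,y]` the derivation `D₃` is `A³ D₀`. -/
lemma derD3_emb5 {K : Type*} [CommRing K] (A B p : MvPolynomial (Fin 2) K) :
    derD3 A B (emb5 p) = emb5 (A ^ 3 * derD0 A B p) := by
  rw [derD3, pderiv_emb5_zero, pderiv_emb5_one, pderiv_emb5_of_two_le 2 (by decide),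
    pderiv_emb5_of_two_le 3 (by decide), pderiv_emb5_of_two_le 4 (by decide)]
  simp only [emb5, derD0, map_add, map_mul, map_pow]
  ring

/-- An additive map satisfying the Leibniz rule, bundled as a derivation over `ℤ`. -/
def bundleDer {E : Type*} [Field E] (δ : E → E) (ha : ∀ a b, δ (a + b) = δ a + δ b)
    (hm : ∀ a b, δ (a * b) = δ a * b + a * δ b) : Derivation ℤ E E :=
  Derivation.mk' (AddMonoidHom.mk' δ ha).toIntLinearMap fun a b => by
    simp only [AddMonoidHom.coe_toIntLinearMap, AddMonoidHom.mk'_apply, smul_eq_mul, hm]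
    ring

/-- If Leibniz maps `d₀` and `d` satisfy `d ∘ j = j ∘ (c · d₀)` on a domain `R`, they do so on its
fraction field: compare the two expansions of the derivative of `(P / Q) * Q = P`. -/
lemma ext_restrict {R E E' : Type*} [CommRing R] [IsDomain R] [Field E] [Algebra R E]
    [IsFractionRing R E] [Field E'] (d₀ : E → E) (d : E' → E') (j : E →+* E') (c : E)
    (hm₀ : ∀ a b, d₀ (a * b) = d₀ a * b + a * d₀ b)
    (hm : ∀ a b, d (a * b) = d a * b + a * d b)
    (h : ∀ p : R, d (j (algebraMap R E p)) = j (c * d₀ (algebraMap R E p))) (F : E) :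
    d (j F) = j (c * d₀ F) := by
  obtain ⟨p, q, hq, rfl⟩ := IsFractionRing.div_surjective (A := R) F
  have hq0 : algebraMap R E q ≠ 0 := IsFractionRing.to_map_ne_zero_of_mem_nonZeroDivisors hq
  set P := algebraMap R E p with hP
  set Q := algebraMap R E q with hQ
  have e : P / Q * Q = P := div_mul_cancel₀ _ hq0
  have h1 := hm₀ (P / Q) Q
  have h2 := hm (j (P / Q)) (j Q)
  rw [e] at h1
  rw [← map_mul, e, hP, h p, ← hP, hQ, h q, ← hQ, h1] at h2
  have hj0 : j Q ≠ 0 := (map_ne_zero j).2 hq0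
  apply mul_right_cancel₀ hj0
  simp only [map_mul, map_add] at h2 ⊢
  linear_combination -h2

/-- The derivative of the candidate first integral; `y₂`, `y₃` and `w₂` drop out. -/
lemma deriv_riccati {E : Type*} [Field E] (D : Derivation ℤ E E)
    {y₁ y₂ y₃ a w₁ w₂ w₃ F G : E} (hy : y₁ ≠ 0) (hF : D F = a ^ 3 * G)
    (h₁ : D y₁ = y₁ * a ^ 2 * w₁) (h₂ : D y₂ = y₂ * a ^ 2 * w₁ + y₁ ^ 2 * a * w₂)
    (h₃ : D y₃ = y₃ * a ^ 2 * w₁ + 3 * y₂ * y₁ * a * w₂ + y₁ ^ 3 * w₃) :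
    D (4 * y₁ ^ 2 * F - 2 * (y₃ / y₁) + 3 * (y₂ ^ 2 / y₁ ^ 2))
      = y₁ ^ 2 * (8 * a ^ 2 * w₁ * F + 4 * a ^ 3 * G - 2 * w₃) := by
  have n2 : D (2 : E) = 0 := by simpa using D.map_natCast 2
  have n3 : D (3 : E) = 0 := by simpa using D.map_natCast 3
  have n4 : D (4 : E) = 0 := by simpa using D.map_natCast 4
  have e : ∀ u v : E, D (u / v) = (v * D u - u * D v) / v ^ 2 := fun u v => by
    rw [D.leibniz_div, smul_eq_mul, smul_eq_mul, smul_eq_mul, div_eq_inv_mul, inv_pow]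
  simp only [map_add, map_sub, D.leibniz, e, pow_two y₁, pow_two y₂, smul_eq_mul, n2, n3, n4,
    hF, h₁, h₂, h₃]
  field_simp
  ring

/-- **Proposition `propinv`, Riccati case** of Chèze–Combot. -/
theorem riccati_first_integral_iff {K : Type*} [Field K] [CharZero K]
    (A B : MvPolynomial (Fin 2) K) (hA : A ≠ 0)
    -- the unique extension of `D₀` to `K(x,y)`
    (δ0 : FractionRing (MvPolynomial (Fin 2) K) → FractionRing (MvPolynomial (Fin 2) K))
    (hδ0a : ∀ a b, δ0 (a + b) = δ0 a + δ0 b)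
    (hδ0m : ∀ a b, δ0 (a * b) = δ0 a * b + a * δ0 b)
    (hδ0e : ∀ p : MvPolynomial (Fin 2) K,
      δ0 (algebraMap (MvPolynomial (Fin 2) K) (FractionRing (MvPolynomial (Fin 2) K)) p)
        = algebraMap (MvPolynomial (Fin 2) K) (FractionRing (MvPolynomial (Fin 2) K))
            (derD0 A B p))
    -- the unique extension of `D₃` to `K(x,y,y₁,y₂,y₃)`
    (δ3 : FractionRing (MvPolynomial (Fin 5) K) → FractionRing (MvPolynomial (Fin 5) K))
    (hδ3a : ∀ a b, δ3 (a + b) = δ3 a + δ3 b)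
    (hδ3m : ∀ a b, δ3 (a * b) = δ3 a * b + a * δ3 b)
    (hδ3e : ∀ p : MvPolynomial (Fin 5) K,
      δ3 (algebraMap (MvPolynomial (Fin 5) K) (FractionRing (MvPolynomial (Fin 5) K)) p)
        = algebraMap (MvPolynomial (Fin 5) K) (FractionRing (MvPolynomial (Fin 5) K))
            (derD3 A B p))
    -- the embedding `K(x,y) ⊆ K(x,y,y₁,y₂,y₃)`
    (j : FractionRing (MvPolynomial (Fin 2) K) →+* FractionRing (MvPolynomial (Fin 5) K))
    (hj : ∀ p : MvPolynomial (Fin 2) K,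
      j (algebraMap (MvPolynomial (Fin 2) K) (FractionRing (MvPolynomial (Fin 2) K)) p)
        = algebraMap (MvPolynomial (Fin 5) K) (FractionRing (MvPolynomial (Fin 5) K)) (emb5 p))
    (F : FractionRing (MvPolynomial (Fin 2) K)) :
    δ3 (4 * algebraMap (MvPolynomial (Fin 5) K) (FractionRing (MvPolynomial (Fin 5) K))
            (X 2) ^ 2 * j F
        - 2 * (algebraMap (MvPolynomial (Fin 5) K) (FractionRing (MvPolynomial (Fin 5) K)) (X 4) /
            algebraMap (MvPolynomial (Fin 5) K) (FractionRing (MvPolynomial (Fin 5) K)) (X 2))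
        + 3 * (algebraMap (MvPolynomial (Fin 5) K) (FractionRing (MvPolynomial (Fin 5) K))
              (X 3) ^ 2 /
            algebraMap (MvPolynomial (Fin 5) K) (FractionRing (MvPolynomial (Fin 5) K))
              (X 2) ^ 2)) = 0 ↔
      δ0 F = -(2 * (algebraMap (MvPolynomial (Fin 2) K) (FractionRing (MvPolynomial (Fin 2) K))
              (wPol A B 1) /
            algebraMap (MvPolynomial (Fin 2) K) (FractionRing (MvPolynomial (Fin 2) K)) A) * F)
        + (1 / 2 : FractionRing (MvPolynomial (Fin 2) K)) *
            (algebraMap (MvPolynomial (Fin 2) K) (FractionRing (MvPolynomial (Fin 2) K))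
              (wPol A B 3) /
            algebraMap (MvPolynomial (Fin 2) K) (FractionRing (MvPolynomial (Fin 2) K)) A ^ 3) := by
  set φ := algebraMap (MvPolynomial (Fin 2) K) (FractionRing (MvPolynomial (Fin 2) K)) with hφ
  set ψ := algebraMap (MvPolynomial (Fin 5) K) (FractionRing (MvPolynomial (Fin 5) K)) with hψ
  have hy : ψ (X 2) ≠ 0 := by
    rw [hψ, Ne, IsFractionRing.to_map_eq_zero_iff]
    exact X_ne_zero 2
  have ha : φ A ≠ 0 := by
    rwa [hφ, Ne, IsFractionRing.to_map_eq_zero_iff]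
  have hF : δ3 (j F) = ψ (emb5 A) ^ 3 * j (δ0 F) := by
    rw [ext_restrict (R := MvPolynomial (Fin 2) K) δ0 δ3 j (φ A ^ 3) hδ0m hδ3m _ F,
      map_mul, map_pow, hj]
    intro p
    rw [← hφ, hj, hδ3e, derD3_emb5, hδ0e, ← map_pow, ← map_mul, hj]
  have h₁ : δ3 (ψ (X 2)) = ψ (X 2) * ψ (emb5 A) ^ 2 * ψ (emb5 (wPol A B 1)) := by
    rw [hδ3e, derD3]
    simp [pderiv_X]
  have h₂ : δ3 (ψ (X 3)) = ψ (X 3) * ψ (emb5 A) ^ 2 * ψ (emb5 (wPol A B 1))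
      + ψ (X 2) ^ 2 * ψ (emb5 A) * ψ (emb5 (wPol A B 2)) := by
    rw [hδ3e, derD3]
    simp [pderiv_X]
  have h₃ : δ3 (ψ (X 4)) = ψ (X 4) * ψ (emb5 A) ^ 2 * ψ (emb5 (wPol A B 1))
      + 3 * ψ (X 3) * ψ (X 2) * ψ (emb5 A) * ψ (emb5 (wPol A B 2))
      + ψ (X 2) ^ 3 * ψ (emb5 (wPol A B 3)) := by
    rw [hδ3e, derD3]
    simp [pderiv_X, show ψ 3 = 3 from map_ofNat ψ 3]
  have key := deriv_riccati (bundleDer δ3 hδ3a hδ3m) hy hF h₁ h₂ h₃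
  change δ3 _ = _ at key
  rw [key, mul_eq_zero, or_iff_right (pow_ne_zero 2 hy)]
  -- The remaining factor lies in `j(K(x,y))`, so the equation descends to `K(x,y)`.
  rw [← hj, ← hj, ← hj]
  have e : 8 * j (φ A) ^ 2 * j (φ (wPol A B 1)) * j F + 4 * j (φ A) ^ 3 * j (δ0 F)
      - 2 * j (φ (wPol A B 3)) = j (8 * φ A ^ 2 * φ (wPol A B 1) * F
        + 4 * φ A ^ 3 * δ0 F - 2 * φ (wPol A B 3)) := by
    simp only [map_sub, map_add, map_mul, map_pow, map_ofNat]
  rw [e, map_eq_zero]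
  have h2 : (2 : FractionRing (MvPolynomial (Fin 2) K)) ≠ 0 := by
    have := (map_ne_zero (algebraMap K (FractionRing (MvPolynomial (Fin 2) K)))).2
      (two_ne_zero (α := K))
    rwa [map_ofNat] at this
  have h4 : 4 * φ A ^ 3 ≠ 0 := by
    have : (4 : FractionRing (MvPolynomial (Fin 2) K)) = 2 * 2 := by norm_num
    rw [this]
    exact mul_ne_zero (mul_ne_zero h2 h2) (pow_ne_zero 3 ha)
  rw [← sub_eq_zero (a := δ0 F), ← mul_eq_zero_iff_left (b := δ0 F - _) h4]
  apply Eq.congr_left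
  field_simp
  ring

end
end ExtacticPaper
end

section
/- Let R be a commutative ring in which 2 is invertible and let δ : R → R be a derivation. Let w, f, u ∈ R be such that δ²(u) = f·u. Then the element v := −w·δ(u) + (1/2)·δ(w)·u satisfies δ²(v) − f·v = (−2·δ(w)·f − w·δ(f) + (1/2)·δ³(w))·u. -/
/-!
# The key Riccati verification (from the proof of Proposition `proprepresent`)

Let `R` be a commutative ring in which `2` is invertible and `δ : R → R` a derivation
(an additive map satisfying the Leibniz rule).  If `w, f, u ∈ R` satisfy `δ²(u) = f·u`,
then `v = −w·δ(u) + (1/2)·δ(w)·u` satisfies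
`δ²(v) − f·v = (−2·δ(w)·f − w·δ(f) + (1/2)·δ³(w))·u`.
-/

/-- **The key computation in the Riccati case** of Chèze–Combot, Proposition
`proprepresent`. -/
theorem riccati_particular_solution {R : Type*} [CommRing R] [Invertible (2 : R)]
    (δ : R → R)
    (hadd : ∀ a b, δ (a + b) = δ a + δ b)
    (hmul : ∀ a b, δ (a * b) = δ a * b + a * δ b)
    (w f u : R) (hu : δ (δ u) = f * u) :
    δ (δ (-w * δ u + ⅟(2 : R) * δ w * u)) - f * (-w * δ u + ⅟(2 : R) * δ w * u)
      = (-2 * δ w * f - w * δ f + ⅟(2 : R) * δ (δ (δ w))) * u := by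
  have h0 : δ 0 = 0 := by simpa using hadd 0 0
  have h1 : δ 1 = 0 := by simpa using hmul 1 1
  have hneg : ∀ a, δ (-a) = -δ a := fun a => by
    have h := hadd a (-a)
    rw [add_neg_cancel, h0] at h
    linear_combination -h
  have h2 : (2 : R) * ⅟(2 : R) = 1 := mul_invOf_self 2
  -- `1/2` is a constant: differentiate `1/2 + 1/2 = 1` and cancel the unit `2`.
  have hc : δ (⅟(2 : R)) = 0 := by
    have h := hadd (⅟(2 : R)) (⅟(2 : R))
    rw [← two_mul, h2, h1] at h
    linear_combination -⅟(2 : R) * h - δ (⅟(2 : R)) * h2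
  simp only [hadd, hmul, hneg, hc, hu, zero_mul, zero_add]
  -- The terms in `δ²(w)·δ(u)` have total coefficient `2·(1/2) - 1`; all others cancel formally.
  linear_combination δ (δ w) * δ u * h2
end

section
/- Let K be a field, R = K[x₁,…,x_m] a polynomial ring, D a K-derivation of R, V ⊆ R a K-subspace of finite dimension l ≥ 1, and g ∈ V a nonconstant Darboux polynomial of D, i.e. g divides D(g) in R. Then for every K-basis (g₁,…,g_l) of V, the polynomial g divides det((D^{i−1}(g_j))_{1≤i,j≤l}) in R. -/
/-!
Write `g₀ = ∑ c j • g j` with `c ≠ 0`, and let `M i j = D^i (g j)`. Since `D` is `K`-linear,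
`M` maps the constant vector `c` to the vector of the `D^i g₀`, all of whose entries are divisible
by `g₀`, because the multiples of `g₀` are stable under `D`. Multiplying by the adjugate of `M`
shows that `g₀ ∣ det M * c k` for every `k`; choosing `c k ≠ 0`, a unit of `R`, gives the claim.
-/

open MvPolynomial

theorem dvd_iterate_derivation {K R : Type*} [CommRing K] [CommRing R] [Algebra K R]
    (D : Derivation K R R) {f : R} (h : f ∣ D f) (n : ℕ) : f ∣ (⇑D)^[n] f := by
  induction n with
  | zero => simp
  | succ n ih =>
    obtain ⟨q, hq⟩ := ih
    rw [Function.iterate_succ_apply', hq, D.leibniz, smul_eq_mul, smul_eq_mul]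
    exact dvd_add (dvd_mul_right _ _) (h.mul_left _)

/-- If `M` maps a vector `c` to a vector with all entries divisible by `f`, then `f` divides
`det M` times each entry of `c`: multiply by the adjugate. -/
theorem dvd_det_mul_of_dvd_mulVec {n R : Type*} [Fintype n] [DecidableEq n] [CommRing R]
    (M : Matrix n n R) (c : n → R) {f : R} (h : ∀ i, f ∣ M.mulVec c i) (k : n) :
    f ∣ M.det * c k := by
  have key : M.adjugate.mulVec (M.mulVec c) k = M.det * c k := by
    rw [Matrix.mulVec_mulVec, Matrix.adjugate_mul, Matrix.smul_mulVec, Matrix.one_mulVec,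
      Pi.smul_apply, smul_eq_mul]
  rw [← key]
  exact Finset.dvd_sum fun i _ => (h i).mul_left _

/-- **Proposition `PropDarbouxfacteurext`** of Chèze–Combot. -/
theorem darboux_polynomial_divides_extactic {K : Type*} [Field K]
    (m : ℕ) (hm : 1 ≤ m)
    (D : Derivation K (MvPolynomial (Fin m) K) (MvPolynomial (Fin m) K))
    (V : Submodule K (MvPolynomial (Fin m) K))
    (l : ℕ) (hl : 1 ≤ l)
    -- `(g₁,…,g_l)` is a `K`-basis of `V`
    (g : Fin l → MvPolynomial (Fin m) K)
    (hgV : ∀ i, g i ∈ V)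
    (hgind : LinearIndependent K g)
    (hgspan : Submodule.span K (Set.range g) = V)
    -- `g₀ ∈ V` is a nonconstant Darboux polynomial of `D`
    (g₀ : MvPolynomial (Fin m) K) (hg₀V : g₀ ∈ V)
    (hg₀nc : ∀ c : K, g₀ ≠ C c)
    (hdarboux : g₀ ∣ D g₀) :
    g₀ ∣ Matrix.det (Matrix.of fun i j : Fin l => (⇑D)^[(i : ℕ)] (g j)) := by
  obtain ⟨c, hc⟩ := (Submodule.mem_span_range_iff_exists_fun K).1 (hgspan ▸ hg₀V)
  obtain ⟨k, hk⟩ : ∃ k, c k ≠ 0 := by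
    by_contra! h
    exact hg₀nc 0 (by simp [← hc, h])
  have hunit : IsUnit (C (c k) : MvPolynomial (Fin m) K) := (isUnit_iff_ne_zero.2 hk).map C
  refine hunit.dvd_mul_right.1 (dvd_det_mul_of_dvd_mulVec _ (fun j => C (c j)) (fun i => ?_) k)
  have hi : (Matrix.of fun i j : Fin l => (⇑D)^[(i : ℕ)] (g j)).mulVec (fun j => C (c j)) i
      = (⇑D)^[(i : ℕ)] g₀ := by
    have hpow : ∀ f, (⇑D)^[(i : ℕ)] f = (D.toLinearMap ^ (i : ℕ)) f := fun f =>
      (Module.End.pow_apply D.toLinearMap (i : ℕ) f).symm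
    simp only [Matrix.mulVec, dotProduct, Matrix.of_apply, hpow, ← hc, map_sum, map_smul]
    exact Finset.sum_congr rfl fun j _ => by rw [mul_comm, C_mul']
  rw [hi]
  exact dvd_iterate_derivation D hdarboux i
end

section
/- Let K be a field of characteristic zero, R = K[x₁,…,x_m] (m ≥ 1), and D a K-derivation of R with D(x₁) ≠ 0, extended uniquely to a derivation of the fraction field K(x₁,…,x_m). Then the following are equivalent: (i) there exists a nonzero finite-dimensional K-subspace V of R with a K-basis (g₁,…,g_l) such that det((D^{i−1}(g_j))_{1≤i,j≤l}) = 0; (ii) D has a rational first integral, i.e. there exists c ∈ K(x₁,…,x_m)∖K with D(c) = 0. -/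
/-!
The theorem rests on the classical fact that, over a field `F` with a derivation `δ`, functions
which are linearly independent over the constants of `δ` have a nonzero Wronskian.

If `D` has no rational first integral, the constants of `δ` on `K(x₁,…,x_m)` are exactly `K`. So a
`K`-independent family of polynomials has nonzero Wronskian
(`eq_zero_of_sum_mul_iterate_eq_zero`, an induction on the size of the family). Conversely, if
`p / q` is a nonconstant first integral, then `(p, q)` is linearly independent over `K` and its
Wronskian `p D(q) - q D(p) = - q² δ(p / q)` vanishes.
-/

open MvPolynomial

/-- If the constants of the derivation `δ` all lie in `K`, the columns of the Wronskian matrix of a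
`K`-linearly independent family are linearly independent. -/
theorem eq_zero_of_sum_mul_iterate_eq_zero {K F : Type*} [Field K] [Field F] [Algebra K F]
    (δ : F →+ F) (hm : ∀ a b, δ (a * b) = δ a * b + a * δ b)
    (hc : ∀ c, δ c = 0 → ∃ a : K, c = algebraMap K F a) :
    ∀ (l : ℕ) (g : Fin l → F), LinearIndependent K g → ∀ v : Fin l → F,
      (∀ i : Fin l, ∑ j, v j * δ^[(i : ℕ)] (g j) = 0) → v = 0 := by
  intro l
  induction l with
  | zero => intro g _ v _; exact Subsingleton.elim _ _
  | succ l ih =>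
    intro g hg v hv
    have hg' : LinearIndependent K (fun j : Fin l => g j.castSucc) :=
      hg.comp _ (Fin.castSucc_injective l)
    by_cases h0 : v (Fin.last l) = 0
    · have := ih _ hg' (fun j => v j.castSucc) (fun i => by
        have := hv i.castSucc
        rw [Fin.sum_univ_castSucc] at this
        simpa [h0] using this)
      funext j
      refine Fin.lastCases h0 (fun j => ?_) j
      exact congrFun this j
    · exfalso
      -- normalise the kernel vector so that its last coordinate is `1`
      set w : Fin (l + 1) → F := fun j => v j / v (Fin.last l) with hw_def
      have hw1 : w (Fin.last l) = 1 := div_self h0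
      have hw : ∀ i : Fin (l + 1), ∑ j, w j * δ^[(i : ℕ)] (g j) = 0 := by
        intro i
        have : ∑ j, w j * δ^[(i : ℕ)] (g j)
            = (∑ j, v j * δ^[(i : ℕ)] (g j)) / v (Fin.last l) := by
          rw [Finset.sum_div]
          exact Finset.sum_congr rfl fun j _ => by simp only [hw_def]; ring
        rw [this, hv i, zero_div]
      have hδ1 : δ 1 = 0 := by simpa using hm 1 1
      -- differentiating row `i` and subtracting row `i + 1` leaves a relation on the `δ (w j)`,
      -- which does not involve the last column since `δ 1 = 0`
      have hd := ih _ hg' (fun j => δ (w j.castSucc)) (fun i => by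
        have h1 := congrArg δ (hw i.castSucc)
        have h2 := hw i.succ
        simp only [map_sum, hm, map_zero, Finset.sum_add_distrib, Fin.val_castSucc] at h1
        simp only [Fin.val_succ, Function.iterate_succ_apply'] at h2
        rw [h2, add_zero, Fin.sum_univ_castSucc, hw1, hδ1, zero_mul, add_zero] at h1
        exact h1)
      have hconst : ∀ j, ∃ a : K, w j = algebraMap K F a := by
        intro j
        refine Fin.lastCases ⟨1, by simp [hw1]⟩ (fun j => hc _ (congrFun hd j)) j
      choose a ha using hconst
      have hrel : ∑ j, a j • g j = 0 := by
        simpa [Algebra.smul_def, ← ha] using hw 0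
      have hz := Fintype.linearIndependent_iff.1 hg a hrel (Fin.last l)
      rw [ha, hz, map_zero] at hw1
      exact zero_ne_one hw1

/-- **Proposition `Propextwronskian`** of Chèze–Combot. -/
theorem extactic_vanishes_iff_rational_first_integral {K : Type*} [Field K] [CharZero K]
    (m : ℕ) (hm : 0 < m)
    (D : Derivation K (MvPolynomial (Fin m) K) (MvPolynomial (Fin m) K))
    (hD : D (X ⟨0, hm⟩) ≠ 0)
    -- the unique extension of `D` to the fraction field `K(x₁,…,x_m)`
    (δ : FractionRing (MvPolynomial (Fin m) K) → FractionRing (MvPolynomial (Fin m) K))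
    (hδa : ∀ a b, δ (a + b) = δ a + δ b)
    (hδm : ∀ a b, δ (a * b) = δ a * b + a * δ b)
    (hδe : ∀ p : MvPolynomial (Fin m) K,
      δ (algebraMap (MvPolynomial (Fin m) K) (FractionRing (MvPolynomial (Fin m) K)) p)
        = algebraMap (MvPolynomial (Fin m) K) (FractionRing (MvPolynomial (Fin m) K)) (D p)) :
    (∃ l : ℕ, 0 < l ∧ ∃ g : Fin l → MvPolynomial (Fin m) K,
        LinearIndependent K g ∧
        Matrix.det (Matrix.of fun i j : Fin l => (⇑D)^[(i : ℕ)] (g j)) = 0) ↔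
    (∃ c : FractionRing (MvPolynomial (Fin m) K),
        (∀ a : K,
          c ≠ algebraMap (MvPolynomial (Fin m) K) (FractionRing (MvPolynomial (Fin m) K)) (C a)) ∧
        δ c = 0) := by
  constructor
  · rintro ⟨l, -, g, hg, hdet⟩
    by_contra! hno
    let F := FractionRing (MvPolynomial (Fin m) K)
    let φ := algebraMap (MvPolynomial (Fin m) K) F
    have hinj : Function.Injective φ := IsFractionRing.injective _ _
    have hgF : LinearIndependent K (fun j => φ (g j)) :=
      hg.map' (IsScalarTower.toAlgHom K (MvPolynomial (Fin m) K) F).toLinearMap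
        (LinearMap.ker_eq_bot.2 hinj)
    have hc : ∀ c : F, δ c = 0 → ∃ a : K, c = algebraMap K F a := by
      intro c h0
      by_contra! h
      refine hno c (fun a hca => h a ?_) h0
      rw [hca, IsScalarTower.algebraMap_apply K (MvPolynomial (Fin m) K) F]
      rfl
    have hit : ∀ (i : ℕ) (p : MvPolynomial (Fin m) K), δ^[i] (φ p) = φ ((⇑D)^[i] p) := by
      intro i p
      exact ((show Function.Semiconj φ D δ from fun q => (hδe q).symm).iterate_right i p).symm
    obtain ⟨v, hv0, hv⟩ := Matrix.exists_mulVec_eq_zero_iff.2 hdet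
    have hz := eq_zero_of_sum_mul_iterate_eq_zero (AddMonoidHom.mk' δ hδa) hδm hc l _ hgF
      (fun j => φ (v j)) (fun i => by
        have h1 := congrArg φ (congrFun hv i)
        simp only [Matrix.mulVec, dotProduct, Matrix.of_apply, map_sum, map_mul, Pi.zero_apply,
          map_zero] at h1
        rw [← h1]
        refine Finset.sum_congr rfl fun j _ => ?_
        rw [mul_comm, ← hit]
        rfl)
    refine hv0 (funext fun j => hinj ?_)
    rw [Pi.zero_apply, map_zero]
    exact congrFun hz j
  · rintro ⟨c, hc, h0⟩
    obtain ⟨p, q, hq, rfl⟩ := IsFractionRing.div_surjective (A := MvPolynomial (Fin m) K) c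
    have hq0 : q ≠ 0 := nonZeroDivisors.ne_zero hq
    let F := FractionRing (MvPolynomial (Fin m) K)
    let φ := algebraMap (MvPolynomial (Fin m) K) F
    have hinj : Function.Injective φ := IsFractionRing.injective _ _
    have hφq : φ q ≠ 0 := by
      rw [← map_zero φ]
      exact hinj.ne hq0
    refine ⟨2, two_pos, ![p, q], ?_, ?_⟩
    · rw [LinearIndependent.pair_symm_iff, LinearIndependent.pair_iff' hq0]
      intro a ha
      apply hc a
      rw [div_eq_iff hφq, ← map_mul, ← ha, MvPolynomial.smul_eq_C_mul]
    · -- `δ p = δ ((p / q) * q) = (p / q) * δ q`, hence `q * D p = p * D q`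
      have h1 := hδm (φ p / φ q) (φ q)
      rw [h0, div_mul_cancel₀ _ hφq, hδe, hδe, zero_mul, zero_add, div_mul_eq_mul_div,
        eq_div_iff hφq, ← map_mul, ← map_mul] at h1
      have h2 := hinj h1
      rw [Matrix.det_fin_two]
      simp only [Matrix.of_apply, Fin.val_zero, Fin.val_one, Function.iterate_zero, id,
        Function.iterate_one, Matrix.cons_val_zero, Matrix.cons_val_one]
      linear_combination -h2
end

section
/- Let K be a field of characteristic zero, R = K[x₁,…,x_m] (m ≥ 1), and D a K-derivation of R. Suppose there exist P, Q ∈ R of total degree ≤ N, linearly independent over K, satisfying Q·D(P) = P·D(Q) (i.e. P/Q is a nonconstant rational first integral of D of degree ≤ N). Then, for (b₁,…,b_l) the monomial basis of the space of polynomials of total degree ≤ N (of dimension l), one has det((D^{i−1}(b_j))_{1≤i,j≤l}) = 0. -/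
/-!
# Vanishing of the extactic determinant in the presence of a rational first integral

In the fraction field, `f = P / Q` is a constant of the extended derivation, so `D (f g) = f · D g`
for every `g`. Hence `P = f Q` gives `Dⁿ P = f · Dⁿ Q`, that is `Q · Dⁿ P = P · Dⁿ Q` for every `n`
(`mul_iterate_eq`, proved without denominators). Write `P = ∑ pᵥ bᵥ` and `Q = ∑ qᵥ bᵥ` in the
monomial basis (`exists_sum_monM`). Then the vector with entries `pᵥ Q - qᵥ P` is annihilated by
every row `(Dⁿ bᵥ)ᵥ` of the matrix. It is nonzero, as otherwise the linear independence of `P` and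
`Q` would force all `pᵥ` to vanish. A square matrix over a domain with a nonzero kernel vector has
determinant zero.
-/

open MvPolynomial

namespace ExtacticPaper

noncomputable section

/-- Indexing set for the monomials of total degree at most `N` in `m` variables:
it is in bijection with the monomial basis of `K[x₁,…,x_m]_{≤N}`. -/
abbrev MonIdxM (m N : ℕ) := {v : Fin m → Fin (N + 1) // (∑ i, ((v i : ℕ))) ≤ N}

/-- The monomial indexed by `v`. -/
def monM {K : Type*} [CommSemiring K] {m N : ℕ} (v : MonIdxM m N) :
    MvPolynomial (Fin m) K :=
  ∏ i, X i ^ ((v.1 i : ℕ))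

/-- The monomials `monM v` span the polynomials of total degree at most `N`. -/
lemma exists_sum_monM {K : Type*} [Field K] {m N : ℕ} {P : MvPolynomial (Fin m) K}
    (hP : P.totalDegree ≤ N) :
    ∃ c : MonIdxM m N → K, ∑ v, c v • (monM v : MvPolynomial (Fin m) K) = P := by
  rw [← Submodule.mem_span_range_iff_exists_fun, P.as_sum]
  refine Submodule.sum_mem _ fun s hs => ?_
  have hsum : ∑ i, s i ≤ N := by
    rw [← Finsupp.sum_fintype s (fun _ e => e) (fun _ => rfl)]
    exact (le_totalDegree hs).trans hP
  have hlt : ∀ i, s i < N + 1 := fun i =>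
    Nat.lt_succ_of_le ((Finset.single_le_sum (fun _ _ => Nat.zero_le _)
      (Finset.mem_univ i)).trans hsum)
  have hmon : monomial s (coeff s P)
      = coeff s P • (monM (⟨fun i => ⟨s i, hlt i⟩, hsum⟩ : MonIdxM m N)) := by
    rw [monM, smul_eq_C_mul, monomial_eq, Finsupp.prod_fintype _ _ (fun _ => pow_zero _)]
  rw [hmon]
  exact Submodule.smul_mem _ _ (Submodule.subset_span ⟨_, rfl⟩)

lemma mul_iterate_eq {K A : Type*} [CommRing K] [CommRing A] [IsDomain A] [Algebra K A]
    (D : Derivation K A A) {P Q : A} (hQ : Q ≠ 0) (h : Q * D P = P * D Q) (n : ℕ) :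
    Q * D^[n] P = P * D^[n] Q := by
  induction n with
  | zero => exact mul_comm Q P
  | succ n ih =>
    rw [Function.iterate_succ_apply', Function.iterate_succ_apply']
    have hD := congrArg D ih
    simp only [Derivation.leibniz, smul_eq_mul] at hD
    -- The cross terms arising from applying `D` to the inductive hypothesis agree.
    have hcross : D Q * D^[n] P = D P * D^[n] Q := by
      apply mul_left_cancel₀ hQ
      linear_combination D Q * ih - D^[n] Q * h
    linear_combination hD - hcross

/-- **Remark `remdegiprexta`** of Chèze–Combot. -/
theorem rational_first_integral_extactic_vanishes {K : Type*} [Field K] [CharZero K]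
    (m : ℕ) (hm : 1 ≤ m)
    (D : Derivation K (MvPolynomial (Fin m) K) (MvPolynomial (Fin m) K))
    (N : ℕ) (P Q : MvPolynomial (Fin m) K)
    (hP : P.totalDegree ≤ N) (hQ : Q.totalDegree ≤ N)
    (hind : LinearIndependent K ![P, Q])
    (hfi : Q * D P = P * D Q) :
    Matrix.det (Matrix.of fun i j : Fin (Fintype.card (MonIdxM m N)) =>
      (⇑D)^[(i : ℕ)] (monM ((Fintype.equivFin (MonIdxM m N)).symm j))) = 0 := by
  have hP0 : P ≠ 0 := hind.ne_zero 0
  have hQ0 : Q ≠ 0 := hind.ne_zero 1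
  obtain ⟨p, hp⟩ := exists_sum_monM hP
  obtain ⟨q, hq⟩ := exists_sum_monM hQ
  set e := Fintype.equivFin (MonIdxM m N)
  have hiter : ∀ (n : ℕ) (c : MonIdxM m N → K),
      ∑ v, D^[n] (monM v) * C (c v) = D^[n] (∑ v, c v • monM v) := by
    intro n c
    have hpow : ∀ x, D^[n] x = ((D : MvPolynomial (Fin m) K →ₗ[K] _) ^ n) x := fun x => by
      rw [Module.End.pow_apply]; rfl
    simp only [hpow, map_sum, map_smul]
    simp only [smul_eq_C_mul, mul_comm]
  rw [← Matrix.exists_mulVec_eq_zero_iff]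
  refine ⟨fun j => C (p (e.symm j)) * Q - C (q (e.symm j)) * P, fun h0 => hP0 ?_, ?_⟩
  · rw [← hp]
    refine Finset.sum_eq_zero fun v _ => ?_
    have hv := congrFun h0 (e v)
    simp only [Equiv.symm_apply_apply, Pi.zero_apply] at hv
    have := (LinearIndependent.pair_iff.mp hind (-q v) (p v) (by
      rw [smul_eq_C_mul, smul_eq_C_mul, map_neg]
      linear_combination hv)).2
    rw [this, zero_smul]
  · funext i
    simp only [Matrix.mulVec, dotProduct, Matrix.of_apply, Pi.zero_apply]
    rw [Equiv.sum_comp e.symm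
      (fun v => D^[(i : ℕ)] (monM v) * (C (p v) * Q - C (q v) * P))]
    have hp' := hiter i p
    have hq' := hiter i q
    rw [hp] at hp'
    rw [hq] at hq'
    simp only [mul_sub, ← mul_assoc, Finset.sum_sub_distrib, ← Finset.sum_mul]
    rw [hp', hq']
    linear_combination mul_iterate_eq D hQ0 hfi i

end
end ExtacticPaper
end

section
/- Let N ≥ 1, k ≥ 1, and l₁ = (N+1)(N+2). Let L₀ = K(X₀, Y₀) and L₁ = K(X₀, Y₀, Y₁) be rational function fields over K in two, respectively three, indeterminates, and extend D₁ coefficient-wise to polynomial rings over L₀ and L₁ (D₁ acts on the variables x, y, y₁ and annihilates X₀, Y₀, Y₁). Then for all P, Q ∈ L₀[x,y] of total degree ≤ N, the following are equivalent: (i) for every 0 ≤ i < l₁, the evaluation of D₁^i(y₁^k·P + Q) at (x, y, y₁) = (X₀, Y₀, 1) is 0 in L₀; (ii) for every 0 ≤ i < l₁, the evaluation of D₁^i(y₁^k·P + Y₁^k·Q) at (x, y, y₁) = (X₀, Y₀, Y₁) is 0 in L₁. -/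
/-!
# Specializing `y₁ = 1` in the Darbouxian extactic kernel loses no information
(Lemma `lem:eval_exta_darboux`)

`K` is a field of characteristic zero, `A, B ∈ K[x,y]` coprime and nonzero, `N, k ≥ 1`,
`l₁ = (N+1)(N+2)`.  Let `L₀ = K(X₀,Y₀)` and `L₁ = K(X₀,Y₀,Y₁)` be rational function
fields over `K`, and extend `D₁ = A² ∂x + A B ∂y + y₁ A² ∂y(B/A) ∂_{y₁}` coefficient-wise
to `L₀[x,y,y₁]` and `L₁[x,y,y₁]`.  Then for all `P, Q ∈ L₀[x,y]` of total degree ≤ N: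
`(∀ 0 ≤ i < l₁, (D₁^i(y₁^k·P + Q))(X₀,Y₀,1) = 0)` if and only if
`(∀ 0 ≤ i < l₁, (D₁^i(y₁^k·P + Y₁^k·Q))(X₀,Y₀,Y₁) = 0)`.
-/

/-!
The derivation `D₁` maps `y₁^k·P + c·Q`, for `P, Q ∈ L[x,y]` and a constant `c`, to
`y₁^k·T_k P + c·T_0 Q`, where `T_m = A² ∂x + A B ∂y + m·A² ∂y(B/A)` acts on `L[x,y]`
(`derD1_pow_mul_add`).  Hence `D₁^i(y₁^k·P + c·Q) = y₁^k·T_k^i P + c·T_0^i Q`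
(`iterate_derD1`).  Write `p_i`, `q_i ∈ L₀` for the values of `T_k^i P`, `T_0^i Q` at `(X₀,Y₀)`.
The value at `(X₀,Y₀,1)` with `c = 1` is `p_i + q_i`, and, since `T_m` commutes with the coefficient
extension `j : L₀ → L₁` (`map_iterate_twD`), the value at `(X₀,Y₀,Y₁)` with `c = Y₁^k` is
`Y₁^k·j(p_i + q_i)`.  As `Y₁ ≠ 0` and `j` is injective, the two vanish together, separately for
each `i`.
-/

open MvPolynomial

namespace ExtacticPaper

noncomputable section

variable {L : Type*}

/-- The rational function field `L₀ = K(X₀,Y₀)`. -/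
abbrev L0 (K : Type*) [Field K] : Type _ := FractionRing (MvPolynomial (Fin 2) K)

/-- The rational function field `L₁ = K(X₀,Y₀,Y₁)`. -/
abbrev L1 (K : Type*) [Field K] : Type _ := FractionRing (MvPolynomial (Fin 3) K)

/-- The coefficient embedding `K → L₀`. -/
def coeK0 (K : Type*) [Field K] : K →+* L0 K :=
  (algebraMap (MvPolynomial (Fin 2) K) (L0 K)).comp (C : K →+* MvPolynomial (Fin 2) K)

/-- The coefficient embedding `K → L₁`. -/
def coeK1 (K : Type*) [Field K] : K →+* L1 K :=
  (algebraMap (MvPolynomial (Fin 3) K) (L1 K)).comp (C : K →+* MvPolynomial (Fin 3) K)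

/-- The operator `T_m = A² ∂x + A B ∂y + m·A² ∂y(B/A)` of `L[x,y]`, which describes the action of
`D₁` on `y₁^m·L[x,y]`. -/
def twD [CommRing L] (A B : MvPolynomial (Fin 2) L) (m : ℕ) (p : MvPolynomial (Fin 2) L) :
    MvPolynomial (Fin 2) L :=
  A ^ 2 * pderiv 0 p + A * B * pderiv 1 p + m * wPol A B 1 * p

theorem pderiv_zero_emb3 [CommRing L] (p : MvPolynomial (Fin 2) L) :
    pderiv (0 : Fin 3) (emb3 p) = emb3 (pderiv 0 p) :=
  pderiv_rename (f := Fin.castLE (by omega)) (Fin.castLE_injective _) 0 p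

theorem pderiv_one_emb3 [CommRing L] (p : MvPolynomial (Fin 2) L) :
    pderiv (1 : Fin 3) (emb3 p) = emb3 (pderiv 1 p) :=
  pderiv_rename (f := Fin.castLE (by omega)) (Fin.castLE_injective _) 1 p

theorem pderiv_two_emb3 [CommRing L] (p : MvPolynomial (Fin 2) L) :
    pderiv (2 : Fin 3) (emb3 p) = 0 := by
  induction p using MvPolynomial.induction_on with
  | C a => simp [emb3]
  | add p q hp hq => simp_all [emb3]
  | mul_X p n hp =>
    simp only [emb3, map_mul, rename_X, Derivation.leibniz, smul_eq_mul] at hp ⊢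
    rw [hp]
    fin_cases n <;> simp [pderiv_X]

/-- `D₁` preserves the shape `y₁^k·P + c·Q`: by the Leibniz rule `D₁(y₁^k) = k·A² ∂y(B/A)·y₁^k`. -/
theorem derD1_pow_mul_add [CommRing L] (A B : MvPolynomial (Fin 2) L) (k : ℕ) (c : L)
    (P Q : MvPolynomial (Fin 2) L) :
    derD1 A B (X 2 ^ k * emb3 P + C c * emb3 Q)
      = X 2 ^ k * emb3 (twD A B k P) + C c * emb3 (twD A B 0 Q) := by
  have h0 : pderiv (0 : Fin 3) (X 2 : MvPolynomial (Fin 3) L) = 0 := by simp [pderiv_X]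
  have h1 : pderiv (1 : Fin 3) (X 2 : MvPolynomial (Fin 3) L) = 0 := by simp [pderiv_X]
  have e : ∀ m p, emb3 (twD A B m p) = emb3 A ^ 2 * emb3 (pderiv 0 p)
      + emb3 A * emb3 B * emb3 (pderiv 1 p) + m * emb3 (wPol A B 1) * emb3 p := by
    intro m p
    simp [twD, emb3]
  rw [e, e]
  simp only [derD1, map_add, Derivation.leibniz, Derivation.leibniz_pow, smul_eq_mul, nsmul_eq_mul,
    pderiv_zero_emb3, pderiv_one_emb3, pderiv_two_emb3, h0, h1, pderiv_X_self, pderiv_C]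
  -- the truncated exponent `k - 1` of the power rule forces a case split
  rcases k with _ | k
  · simp; ring
  · simp; ring

theorem iterate_derD1 [CommRing L] (A B : MvPolynomial (Fin 2) L) (k : ℕ) (c : L)
    (P Q : MvPolynomial (Fin 2) L) (i : ℕ) :
    (derD1 A B)^[i] (X 2 ^ k * emb3 P + C c * emb3 Q)
      = X 2 ^ k * emb3 ((twD A B k)^[i] P) + C c * emb3 ((twD A B 0)^[i] Q) := by
  induction i generalizing P Q with
  | zero => rfl
  | succ i ih => rw [Function.iterate_succ_apply, derD1_pow_mul_add, ih]; rfl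

theorem map_twD {M : Type*} [CommRing L] [CommRing M] (f : L →+* M)
    (A B : MvPolynomial (Fin 2) L) (m : ℕ) (p : MvPolynomial (Fin 2) L) :
    MvPolynomial.map f (twD A B m p)
      = twD (MvPolynomial.map f A) (MvPolynomial.map f B) m (MvPolynomial.map f p) := by
  simp [twD, wPol, pderiv_map]

theorem map_iterate_twD {M : Type*} [CommRing L] [CommRing M] (f : L →+* M)
    (A B : MvPolynomial (Fin 2) L) (m i : ℕ) (p : MvPolynomial (Fin 2) L) :
    MvPolynomial.map f ((twD A B m)^[i] p)
      = (twD (MvPolynomial.map f A) (MvPolynomial.map f B) m)^[i] (MvPolynomial.map f p) := by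
  induction i generalizing p with
  | zero => rfl
  | succ i ih => rw [Function.iterate_succ_apply, ih, map_twD]; rfl

theorem eval_emb3 [CommRing L] (a b c : L) (p : MvPolynomial (Fin 2) L) :
    eval ![a, b, c] (emb3 p) = eval ![a, b] p := by
  rw [emb3, eval_rename]
  congr 2
  funext n
  fin_cases n <;> rfl

theorem eval_iterate_derD1 [CommRing L] (A B : MvPolynomial (Fin 2) L) (k : ℕ) (a b u c : L)
    (P Q : MvPolynomial (Fin 2) L) (i : ℕ) :
    eval ![a, b, u] ((derD1 A B)^[i] (X 2 ^ k * emb3 P + C c * emb3 Q))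
      = u ^ k * eval ![a, b] ((twD A B k)^[i] P) + c * eval ![a, b] ((twD A B 0)^[i] Q) := by
  simp [iterate_derD1, eval_emb3]

/-- **Lemma `lem:eval_exta_darboux`** of Chèze–Combot. -/
theorem darbouxian_extactic_kernel_specialization {K : Type*} [Field K] [CharZero K]
    (A B : MvPolynomial (Fin 2) K) (hA : A ≠ 0) (hB : B ≠ 0)
    (hcop : ∀ p : MvPolynomial (Fin 2) K, p ∣ A → p ∣ B → IsUnit p)
    (N k : ℕ) (hN : 1 ≤ N) (hk : 1 ≤ k)
    -- the embedding `L₀ = K(X₀,Y₀) ⊆ L₁ = K(X₀,Y₀,Y₁)`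
    (j : L0 K →+* L1 K)
    (hj : ∀ p : MvPolynomial (Fin 2) K,
      j (algebraMap (MvPolynomial (Fin 2) K) (L0 K) p)
        = algebraMap (MvPolynomial (Fin 3) K) (L1 K) (emb3 p))
    (P Q : MvPolynomial (Fin 2) (L0 K))
    (hP : P.totalDegree ≤ N) (hQ : Q.totalDegree ≤ N) :
    (∀ i : ℕ, i < (N + 1) * (N + 2) →
      eval ![algebraMap (MvPolynomial (Fin 2) K) (L0 K) (X 0),
             algebraMap (MvPolynomial (Fin 2) K) (L0 K) (X 1), 1]
        ((derD1 (MvPolynomial.map (coeK0 K) A) (MvPolynomial.map (coeK0 K) B))^[i]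
          (X 2 ^ k * emb3 P + emb3 Q)) = 0) ↔
    (∀ i : ℕ, i < (N + 1) * (N + 2) →
      eval ![algebraMap (MvPolynomial (Fin 3) K) (L1 K) (X 0),
             algebraMap (MvPolynomial (Fin 3) K) (L1 K) (X 1),
             algebraMap (MvPolynomial (Fin 3) K) (L1 K) (X 2)]
        ((derD1 (MvPolynomial.map (coeK1 K) A) (MvPolynomial.map (coeK1 K) B))^[i]
          (X 2 ^ k * MvPolynomial.map j (emb3 P)
            + C (algebraMap (MvPolynomial (Fin 3) K) (L1 K) (X 2) ^ k) *
                MvPolynomial.map j (emb3 Q))) = 0) := by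
  have hc : j.comp (coeK0 K) = coeK1 K := by
    ext x
    simp [coeK0, coeK1, hj, emb3]
  have hX0 : j (algebraMap (MvPolynomial (Fin 2) K) (L0 K) (X 0))
      = algebraMap (MvPolynomial (Fin 3) K) (L1 K) (X 0) := by
    rw [hj, emb3, rename_X]; rfl
  have hX1 : j (algebraMap (MvPolynomial (Fin 2) K) (L0 K) (X 1))
      = algebraMap (MvPolynomial (Fin 3) K) (L1 K) (X 1) := by
    rw [hj, emb3, rename_X]; rfl
  have hY : algebraMap (MvPolynomial (Fin 3) K) (L1 K) (X 2) ≠ 0 := by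
    rw [Ne, IsFractionRing.to_map_eq_zero_iff]
    exact X_ne_zero 2
  have hm : ∀ p, MvPolynomial.map j (emb3 p) = emb3 (MvPolynomial.map j p) := fun p =>
    map_rename j _ p
  have hev : ∀ p, eval ![algebraMap (MvPolynomial (Fin 3) K) (L1 K) (X 0),
      algebraMap (MvPolynomial (Fin 3) K) (L1 K) (X 1)] (MvPolynomial.map j p)
      = j (eval ![algebraMap (MvPolynomial (Fin 2) K) (L0 K) (X 0),
          algebraMap (MvPolynomial (Fin 2) K) (L0 K) (X 1)] p) := by
    intro p
    rw [← hX0, ← hX1, eval_map, ← eval₂_id, eval₂_comp_left j, RingHomCompTriple.comp_eq]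
    congr 1
    funext n
    fin_cases n <;> rfl
  refine forall_congr' fun i => imp_congr_right fun _ => ?_
  have h1 := eval_iterate_derD1 (MvPolynomial.map (coeK0 K) A) (MvPolynomial.map (coeK0 K) B) k
    (algebraMap (MvPolynomial (Fin 2) K) (L0 K) (X 0))
    (algebraMap (MvPolynomial (Fin 2) K) (L0 K) (X 1)) 1 1 P Q i
  rw [map_one, one_mul, one_pow, one_mul, one_mul] at h1
  rw [h1, hm, hm, eval_iterate_derD1, ← hc, ← MvPolynomial.map_map, ← MvPolynomial.map_map,
    ← map_iterate_twD, ← map_iterate_twD, hev, hev, ← mul_add, ← map_add j, mul_eq_zero,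
    or_iff_right (pow_ne_zero k hY), map_eq_zero j]

end
end ExtacticPaper
end

section
/- Let N ≥ 1, k ≥ 1, and l₁ = (N+1)(N+2). Let M be the l₁×l₁ matrix over K[x,y] whose (i,j) entry is the polynomial obtained from D₁^{i−1}(v_j) by substituting y₁ = 1, where (v₁,…,v_{l₁}) = (b₁,…,b_l, y₁^k·b₁,…,y₁^k·b_l) is the basis of V₁ = K[x,y]_{≤N} ⊕ K[x,y]_{≤N}·y₁^k. Then every minor of M (the determinant of any square submatrix of M) has total degree at most N·l₁ + (2d−1)·l₁·(l₁−1)/2. -/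
/-!
Why the bound holds: each summand `K[x,y]·y₁^m` is stable under `D₁`, because the coefficient of
`∂_{y₁}` is divisible by `y₁`. On it `D₁` acts as
`q ↦ A² ∂x q + A B ∂y q + m (A ∂y B − B ∂y A) q` (`derD1_X_pow_mul_emb3`), which raises the degree
by at most `2d − 1` (`totalDegree_stepD1_le`): in every term one derivative is taken and two
factors of degree at most `d` are multiplied in. So row `i` of the matrix, counted from `0`, has
entries of degree at most `N + i (2d − 1)`.

A minor with a repeated row vanishes. Otherwise each term of its Leibniz expansion takes one entry
from each of its distinct rows, so its degree is at most the sum of the row bounds over all rows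
(`totalDegree_det_submatrix_le`). The number of rows is at most `(N+1)(N+2)`
(`card_monIdx_sum_le`).
-/

/-!
# Degree bound for the minors of the Darbouxian extactic matrix (Lemma `lem:boundBi`)

`K` is a field of characteristic zero, `A, B ∈ K[x,y]` coprime and nonzero,
`d = max(deg A, deg B) ≥ 1`, `N, k ≥ 1` and `l₁ = (N+1)(N+2)`.  Let `M` be the `l₁ × l₁`
matrix over `K[x,y]` whose `(i,j)` entry is `D₁^{i−1}(v_j)` specialized at `y₁ = 1`,
where `(v_j)` is the basis `(b₁,…,b_l, y₁^k b₁,…,y₁^k b_l)` of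
`V₁ = K[x,y]_{≤N} ⊕ K[x,y]_{≤N}·y₁^k`.  Then every minor of `M` (the determinant of any
square submatrix) has total degree at most `N·l₁ + (2d−1)·l₁(l₁−1)/2`.
-/

open MvPolynomial

namespace ExtacticPaper

noncomputable section

variable {L : Type*}

/-- Indexing set for the monomials of total degree at most `N` in two variables:
it has `(N+1)(N+2)/2` elements. -/
abbrev MonIdx (N : ℕ) := {p : Fin (N + 1) × Fin (N + 1) // (p.1 : ℕ) + (p.2 : ℕ) ≤ N}

/-- The monomial basis of `L[x,y]_{≤ N}`. -/
def mon [CommSemiring L] {N : ℕ} (p : MonIdx N) : MvPolynomial (Fin 2) L :=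
  X 0 ^ (p.1.1 : ℕ) * X 1 ^ (p.1.2 : ℕ)

/-- The basis `(b₁,…,b_l, y₁^k b₁,…, y₁^k b_l)` of `V₁ = L[x,y]_{≤N} ⊕ L[x,y]_{≤N} y₁^k`. -/
def basV1 [CommSemiring L] (k : ℕ) {N : ℕ} : MonIdx N ⊕ MonIdx N → MvPolynomial (Fin 3) L
  | .inl p => emb3 (mon p)
  | .inr p => X 2 ^ k * emb3 (mon p)

/-- The `l₁ × l₁` Darbouxian extactic matrix: `(i,j)` entry `D₁^{i−1}(v_j)` specialized
at `y₁ = 1`. -/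
def extacticMat1 [CommRing L] (A B : MvPolynomial (Fin 2) L) (N k : ℕ) :
    Matrix (Fin (Fintype.card (MonIdx N ⊕ MonIdx N)))
      (Fin (Fintype.card (MonIdx N ⊕ MonIdx N))) (MvPolynomial (Fin 2) L) :=
  Matrix.of fun i j =>
    aeval ![X 0, X 1, 1]
      ((derD1 A B)^[(i : ℕ)] (basV1 k ((Fintype.equivFin (MonIdx N ⊕ MonIdx N)).symm j)))

/-- A derivative lowers the degree by one, and kills the constants. The product form avoids the
truncated subtraction at `q.totalDegree = 0`. -/
lemma totalDegree_mul_pderiv_le {σ R : Type*} [CommSemiring R] (P q : MvPolynomial σ R) (i : σ)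
    {m n : ℕ} (hP : P.totalDegree ≤ m) (hq : q.totalDegree ≤ n) :
    (P * pderiv i q).totalDegree ≤ m + n - 1 := by
  by_cases h0 : pderiv i q = 0
  · simp [h0]
  have key : (pderiv i q).totalDegree + 1 ≤ q.totalDegree := by
    obtain ⟨m, hm, hmd⟩ := Finset.exists_max_image (pderiv i q).support
      (fun m => m.sum fun _ e => e) (support_nonempty.2 h0)
    have h1 : (pderiv i q).totalDegree ≤ m.sum fun _ e => e := by
      rw [totalDegree]; exact Finset.sup_le hmd
    have h2 : m + Finsupp.single i 1 ∈ q.support := by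
      rw [mem_support_iff] at hm ⊢
      rw [coeff_pderiv] at hm
      exact left_ne_zero_of_mul hm
    have h3 := le_totalDegree h2
    rw [Finsupp.sum_add_index' (fun _ => rfl) (fun _ _ _ => rfl),
      Finsupp.sum_single_index rfl] at h3
    omega
  have := totalDegree_mul P (pderiv i q)
  omega

lemma emb3_injective_index : Function.Injective (Fin.castLE (by omega : 2 ≤ 3)) :=
  Fin.castLE_injective _

/-- The polynomial `q'` such that `D₁ (y₁^m q) = y₁^m q'`. -/
def stepD1 [CommRing L] (A B : MvPolynomial (Fin 2) L) (m : ℕ) (q : MvPolynomial (Fin 2) L) :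
    MvPolynomial (Fin 2) L :=
  A ^ 2 * pderiv 0 q + A * B * pderiv 1 q + (m : MvPolynomial (Fin 2) L) * (wPol A B 1 * q)

/-- `D₁` preserves each summand `L[x,y]·y₁^m`, since its `∂_{y₁}` coefficient is divisible
by `y₁`. -/
lemma derD1_X_pow_mul_emb3 [CommRing L] (A B q : MvPolynomial (Fin 2) L) (m : ℕ) :
    derD1 A B (X 2 ^ m * emb3 q) = X 2 ^ m * emb3 (stepD1 A B m q) := by
  have e0 : pderiv (0 : Fin 3) (emb3 q) = emb3 (pderiv 0 q) :=
    pderiv_rename emb3_injective_index 0 q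
  have e1 : pderiv (1 : Fin 3) (emb3 q) = emb3 (pderiv 1 q) :=
    pderiv_rename emb3_injective_index 1 q
  have e2 : pderiv (2 : Fin 3) (emb3 q) = 0 := by
    apply pderiv_eq_zero_of_notMem_vars
    intro h
    classical
    obtain ⟨j, -, hj⟩ := Finset.mem_image.1 (vars_rename _ q h)
    have := congrArg Fin.val hj
    have := j.2
    simp at *
    omega
  have hstep : emb3 (stepD1 A B m q) = emb3 A ^ 2 * emb3 (pderiv 0 q)
      + emb3 A * emb3 B * emb3 (pderiv 1 q)
      + (m : MvPolynomial (Fin 3) L) * (emb3 (wPol A B 1) * emb3 q) := by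
    simp [stepD1, emb3]
  rw [hstep, derD1]
  simp only [pderiv_mul, pderiv_pow, e0, e1, e2, pderiv_X_self,
    pderiv_X_of_ne (show (2 : Fin 3) ≠ 0 by decide),
    pderiv_X_of_ne (show (2 : Fin 3) ≠ 1 by decide)]
  rcases m with _ | m
  · simp
  · simp only [Nat.add_sub_cancel]
    push_cast
    ring

lemma derD1_iterate [CommRing L] (A B q : MvPolynomial (Fin 2) L) (m i : ℕ) :
    (derD1 A B)^[i] (X 2 ^ m * emb3 q) = X 2 ^ m * emb3 ((stepD1 A B m)^[i] q) := by
  induction i with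
  | zero => rfl
  | succ i ih => rw [Function.iterate_succ_apply', Function.iterate_succ_apply', ih,
      derD1_X_pow_mul_emb3]

lemma totalDegree_wPol_one_le [CommRing L] (A B : MvPolynomial (Fin 2) L) (d : ℕ)
    (hA : A.totalDegree ≤ d) (hB : B.totalDegree ≤ d) :
    (wPol A B 1).totalDegree ≤ 2 * d - 1 := by
  have h1 := totalDegree_mul_pderiv_le A B 1 hA hB
  have h2 := totalDegree_mul_pderiv_le B A 1 hB hA
  have : wPol A B 1 = A * pderiv 1 B - B * pderiv 1 A := by simp [wPol]
  rw [this]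
  have := totalDegree_sub (A * pderiv 1 B) (B * pderiv 1 A)
  omega

lemma totalDegree_stepD1_le [CommRing L] (A B q : MvPolynomial (Fin 2) L) (d m n : ℕ)
    (hA : A.totalDegree ≤ d) (hB : B.totalDegree ≤ d) (hd : 1 ≤ d) (hq : q.totalDegree ≤ n) :
    (stepD1 A B m q).totalDegree ≤ n + (2 * d - 1) := by
  have hAA : (A ^ 2).totalDegree ≤ 2 * d := (totalDegree_pow A 2).trans (by omega)
  have hAB : (A * B).totalDegree ≤ 2 * d := (totalDegree_mul A B).trans (by omega)
  have h1 := totalDegree_mul_pderiv_le (A ^ 2) q 0 hAA hq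
  have h2 := totalDegree_mul_pderiv_le (A * B) q 1 hAB hq
  have h3 : ((m : MvPolynomial (Fin 2) L) * (wPol A B 1 * q)).totalDegree ≤ n + (2 * d - 1) := by
    have hw := totalDegree_wPol_one_le A B d hA hB
    have ha := totalDegree_mul (m : MvPolynomial (Fin 2) L) (wPol A B 1 * q)
    have hb := totalDegree_mul (wPol A B 1) q
    have hc : (m : MvPolynomial (Fin 2) L).totalDegree = 0 := by
      rw [← map_natCast (C : L →+* MvPolynomial (Fin 2) L), totalDegree_C]
    omega
  refine (totalDegree_add _ _).trans (max_le ((totalDegree_add _ _).trans (max_le ?_ ?_)) h3)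
  all_goals omega

lemma totalDegree_stepD1_iterate_le [CommRing L] (A B q : MvPolynomial (Fin 2) L) (d m n : ℕ)
    (hA : A.totalDegree ≤ d) (hB : B.totalDegree ≤ d) (hd : 1 ≤ d) (hq : q.totalDegree ≤ n)
    (i : ℕ) : ((stepD1 A B m)^[i] q).totalDegree ≤ n + i * (2 * d - 1) := by
  induction i with
  | zero => simpa using hq
  | succ i ih =>
    rw [Function.iterate_succ_apply']
    refine (totalDegree_stepD1_le A B _ d m _ hA hB hd ih).trans (le_of_eq ?_)
    ring

lemma aeval_X_pow_mul_emb3 [CommRing L] (m : ℕ) (q : MvPolynomial (Fin 2) L) :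
    aeval (![X 0, X 1, 1] : Fin 3 → MvPolynomial (Fin 2) L) (X 2 ^ m * emb3 q) = q := by
  have h : (![X 0, X 1, 1] : Fin 3 → MvPolynomial (Fin 2) L) ∘ Fin.castLE (by omega : 2 ≤ 3)
      = X := by
    funext j; fin_cases j <;> rfl
  rw [map_mul, map_pow, aeval_X, emb3, aeval_rename, h, aeval_X_left]
  simp

lemma totalDegree_mon_le [CommSemiring L] {N : ℕ} (p : MonIdx N) :
    (mon p : MvPolynomial (Fin 2) L).totalDegree ≤ N := by
  have h : (mon p : MvPolynomial (Fin 2) L).IsHomogeneous ((p.1.1 : ℕ) + (p.1.2 : ℕ)) :=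
    (isHomogeneous_X_pow 0 _).mul (isHomogeneous_X_pow 1 _)
  exact h.totalDegree_le.trans p.2

lemma totalDegree_extacticMat1_le [CommRing L] (A B : MvPolynomial (Fin 2) L) (d N k : ℕ)
    (hA : A.totalDegree ≤ d) (hB : B.totalDegree ≤ d) (hd : 1 ≤ d)
    (i j : Fin (Fintype.card (MonIdx N ⊕ MonIdx N))) :
    (extacticMat1 A B N k i j).totalDegree ≤ N + i * (2 * d - 1) := by
  obtain ⟨m, p, hp⟩ : ∃ (m : ℕ) (p : MonIdx N),
      basV1 k ((Fintype.equivFin (MonIdx N ⊕ MonIdx N)).symm j)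
        = (X 2 ^ m * emb3 (mon p) : MvPolynomial (Fin 3) L) := by
    rcases (Fintype.equivFin (MonIdx N ⊕ MonIdx N)).symm j with p | p
    · exact ⟨0, p, by simp [basV1]⟩
    · exact ⟨k, p, rfl⟩
  rw [extacticMat1, Matrix.of_apply, hp, derD1_iterate, aeval_X_pow_mul_emb3]
  exact totalDegree_stepD1_iterate_le A B _ d m N hA hB hd (totalDegree_mon_le p) i

/-- Two copies of the triangle `a + b ≤ N` fit in an `(N+1) × (N+2)` rectangle, the second one
after a half-turn. -/
lemma card_monIdx_sum_le (N : ℕ) :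
    Fintype.card (MonIdx N ⊕ MonIdx N) ≤ (N + 1) * (N + 2) := by
  let f : MonIdx N ⊕ MonIdx N → Fin (N + 1) × Fin (N + 2) := fun
    | .inl p => (⟨p.1.1, by omega⟩, ⟨p.1.2, by omega⟩)
    | .inr p => (⟨N - p.1.1, by omega⟩, ⟨N + 1 - p.1.2, by omega⟩)
  have hf : Function.Injective f := by
    rintro (⟨⟨⟨a, ha⟩, ⟨b, hb⟩⟩, hab⟩ | ⟨⟨⟨a, ha⟩, ⟨b, hb⟩⟩, hab⟩)
      (⟨⟨⟨a', ha'⟩, ⟨b', hb'⟩⟩, hab'⟩ | ⟨⟨⟨a', ha'⟩, ⟨b', hb'⟩⟩, hab'⟩) h <;>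
    simp [f] at h hab hab' ⊢ <;> omega
  simpa using Fintype.card_le_of_injective f hf

/-- Degree bound for a minor with distinct rows when row `i` has entries of degree at most
`N + i e`: the Leibniz expansion takes one entry from each selected row. -/
lemma totalDegree_det_submatrix_le {σ R : Type*} [CommRing R] {n s N e : ℕ}
    (M : Matrix (Fin n) (Fin n) (MvPolynomial σ R))
    (hM : ∀ i j, (M i j).totalDegree ≤ N + i * e) (r c : Fin s → Fin n)
    (hr : Function.Injective r) :
    (M.submatrix r c).det.totalDegree ≤ N * n + e * (n * (n - 1) / 2) := by
  have hs : s ≤ n := by simpa using Fintype.card_le_of_injective r hr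
  have hsum : ∑ i, (r i : ℕ) ≤ n * (n - 1) / 2 := by
    rw [← Finset.sum_range_id, ← Fin.sum_univ_eq_sum_range (fun i => i) n]
    exact (Finset.sum_map Finset.univ ⟨r, hr⟩ (fun j : Fin n => (j : ℕ))).symm.trans_le
      (Finset.sum_le_sum_of_subset (Finset.subset_univ _))
  rw [← Matrix.det_transpose, Matrix.det_apply]
  refine totalDegree_finsetSum_le fun τ _ => ?_
  have hτ : (Equiv.Perm.sign τ • ∏ i, (M.submatrix r c).transpose (τ i) i).totalDegree
      ≤ (∏ i, (M.submatrix r c).transpose (τ i) i).totalDegree := by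
    rcases Int.units_eq_one_or (Equiv.Perm.sign τ) with h | h <;> simp [h]
  calc _ ≤ _ := hτ
    _ ≤ ∑ i, (N + (r i : ℕ) * e) :=
      (totalDegree_finsetProd _ _).trans (Finset.sum_le_sum fun i _ => hM _ _)
    _ = N * s + e * ∑ i, (r i : ℕ) := by
      rw [Finset.sum_add_distrib, ← Finset.sum_mul]
      simp [mul_comm]
    _ ≤ _ := by gcongr

/-- **Lemma `lem:boundBi`, Darbouxian case** of Chèze–Combot: every minor of the
Darbouxian extactic matrix has total degree at most `N·l₁ + (2d−1)·l₁(l₁−1)/2`. -/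
theorem darbouxian_extactic_minor_degree_bound {K : Type*} [Field K] [CharZero K]
    (A B : MvPolynomial (Fin 2) K) (hA : A ≠ 0) (hB : B ≠ 0)
    (hcop : ∀ p : MvPolynomial (Fin 2) K, p ∣ A → p ∣ B → IsUnit p)
    (d : ℕ) (hd : d = max A.totalDegree B.totalDegree) (hd1 : 1 ≤ d)
    (N k : ℕ) (hN : 1 ≤ N) (hk : 1 ≤ k)
    (s : ℕ) (r : Fin s → Fin (Fintype.card (MonIdx N ⊕ MonIdx N)))
    (c : Fin s → Fin (Fintype.card (MonIdx N ⊕ MonIdx N))) :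
    (Matrix.det ((extacticMat1 A B N k).submatrix r c)).totalDegree
      ≤ N * ((N + 1) * (N + 2))
        + (2 * d - 1) * (((N + 1) * (N + 2)) * ((N + 1) * (N + 2) - 1) / 2) := by
  by_cases hr : Function.Injective r
  · have hA' : A.totalDegree ≤ d := by omega
    have hB' : B.totalDegree ≤ d := by omega
    refine (totalDegree_det_submatrix_le _
      (totalDegree_extacticMat1_le A B d N k hA' hB' hd1) r c hr).trans ?_
    have := card_monIdx_sum_le N
    gcongr
  · obtain ⟨i, j, hij, hne⟩ : ∃ i j, r i = r j ∧ i ≠ j := by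
      simpa [Function.Injective] using hr
    rw [Matrix.det_zero_of_row_eq hne (by funext t; simp [Matrix.submatrix_apply, hij])]
    simp

end
end ExtacticPaper
end
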